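/- arXiv:2112.04220 — 4 statements merged into one kernel-verified Lean document; each statement's English description precedes it below -/
import Mathlib

section
/- Let G be a finite non-solvable group such that the number i₂(G) of elements of G of order 2 satisfies i₂(G) < |G|/15. Then o(G) > 211/60, i.e., o(G) > o(A_5). -/
/-- The average element order `o(G) = ψ(G)/|G|` of a finite group `G`,
where `ψ(G) = ∑_{x ∈ G} |x|` is the sum of the orders of all elements of `G`. -/
noncomputable def avgOrder (G : Type*) [Group G] [Fintype G] : ℚ :=
  (∑ x : G, (orderOf x : ℚ)) / (Fintype.card G : ℚ)

/-- `i₂(G)`: the number of elements of order exactly 2 in `G`. -/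
noncomputable def numOrderTwo (G : Type*) [Group G] [Fintype G] : ℕ :=
  (Finset.univ.filter fun g : G => orderOf g = 2).card

theorem collapse5 {X : Type*} (g gi x xi : X → X) (c : X)
    (a1 : ∀ y, g (gi y) = y) (a2 : ∀ y, gi (g y) = y)
    (b1 : ∀ y, x (xi y) = y) (b2 : ∀ y, xi (x y) = y) (hc : g c = c)
    (r0 : ∀ y, x (x (x y)) = y)
    (r1 : ∀ y, g (g (g (g (g y)))) = y)
    (r2 : ∀ y, g (x (g (x (g (x y))))) = y)
    (r3 : ∀ y, gi (x (gi (x (gi (x (gi (x y))))))) = y)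
    (r4 : ∀ y, gi (gi (x (gi (gi (x (gi (gi (x (gi (gi (x y))))))))))) = y)
    (r5 : ∀ y, g (g (x (g (g (x (g (g (x (g (g (x y))))))))))) = y) :
    x c = c := by
  have h0 := r0 (gi (xi (g (xi c))))
  have h1 := r2 (gi (gi (gi (xi c))))
  have h2 := r3 (x (gi (gi (xi c))))
  have h3 := r0 (xi (gi (gi (xi c))))
  have h4 := r4 (x (g (xi (xi c))))
  have h5 := r0 (xi (g (xi (xi c))))
  have h6 := r2 (xi (g (xi (xi c))))
  have h7 := r2 (x (gi (xi (xi c))))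
  have h8 := r3 (x (gi (xi (xi c))))
  have h9 := r0 (xi (gi (xi (xi c))))
  have h10 := r2 (xi (gi (xi (xi c))))
  have h11 := r5 (xi (gi (xi (xi c))))
  have h12 := r3 (gi (xi (xi (xi c))))
  have h13 := r1 (xi (xi (xi (xi c))))
  have h14 := r0 (xi (xi (xi (xi c))))
  have h15 := r2 (xi (xi (xi (xi c))))
  have h16 := r5 (xi (xi (xi (xi c))))
  clear r0 r1 r2 r3 r4 r5
  grind

theorem collapse7 {X : Type*} (g gi x xi : X → X) (c : X)
    (a1 : ∀ y, g (gi y) = y) (a2 : ∀ y, gi (g y) = y)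
    (b1 : ∀ y, x (xi y) = y) (b2 : ∀ y, xi (x y) = y) (hc : g c = c)
    (r0 : ∀ y, x (x (x y)) = y)
    (r1 : ∀ y, g (x (g (x (g (x y))))) = y)
    (r2 : ∀ y, g (g (g (g (g (g (g y)))))) = y)
    (r3 : ∀ y, gi (x (gi (x (gi (x (gi (x y))))))) = y)
    (r4 : ∀ y, g (g (g (x (g (g (g (x (g (g (g (x y))))))))))) = y)
    (r5 : ∀ y, g (g (x (g (g (x (g (g (x (g (g (x y))))))))))) = y)
    (r6 : ∀ y, gi (gi (gi (x (gi (gi (gi (x (gi (gi (gi (x (gi (gi (gi (x y))))))))))))))) = y) :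
    x c = c := by
  have h0 := r4 (x (gi (x c)))
  have h1 := r2 (xi (gi (x c)))
  have h2 := r2 (g (x (x c)))
  have h3 := r0 (g (x (x c)))
  have h4 := r1 (g (x (x c)))
  have h5 := r4 (g (x (x c)))
  have h6 := r6 (g (x (x c)))
  have h7 := r4 (g (xi (xi c)))
  have h8 := r6 (g (xi (xi c)))
  have h9 := r2 (gi (xi (xi c)))
  have h10 := r0 (gi (xi (xi c)))
  have h11 := r1 (gi (xi (xi c)))
  have h12 := r3 (gi (xi (xi c)))
  have h13 := r0 (xi (xi (xi c)))
  have h14 := r1 (xi (xi (xi c)))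
  have h15 := r5 (xi (xi (xi c)))
  have h16 := r4 (xi (xi (xi c)))
  clear r0 r1 r2 r3 r4 r5 r6
  grind


/-! ### Group versions of the two coset enumerations -/

theorem collapse_five {G : Type*} [Group G] (g x : G) (h5 : g ^ 5 = 1) (h0 : x ^ 3 = 1)
    (h1 : (g * x) ^ 3 = 1) (h2 : (g ^ 2 * x) ^ 4 = 1) (h3 : (g ^ 3 * x) ^ 4 = 1)
    (h4 : (g ^ 4 * x) ^ 4 = 1) : g = 1 := by
  have e3 : g ^ 3 = g⁻¹ * g⁻¹ := by
    calc g ^ 3 = g ^ 5 * (g⁻¹ * g⁻¹) := by group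
      _ = _ := by rw [h5, one_mul]
  have e4 : g ^ 4 = g⁻¹ := by
    calc g ^ 4 = g ^ 5 * g⁻¹ := by group
      _ = _ := by rw [h5, one_mul]
  rw [e3] at h3
  rw [e4] at h4
  simp only [pow_succ, pow_zero, one_mul, mul_assoc] at h5 h0 h1 h2 h3 h4
  have act : ∀ (u : G), u = 1 → ∀ y : G ⧸ Subgroup.zpowers g, u • y = y := by
    intro u hu y; rw [hu, one_smul]
  have key := collapse5 (X := G ⧸ Subgroup.zpowers g) (g • ·) (g⁻¹ • ·) (x • ·) (x⁻¹ • ·)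
    ((1 : G) : G ⧸ Subgroup.zpowers g) (by simp) (by simp) (by simp) (by simp)
    (by
      change ((g * 1 : G) : G ⧸ Subgroup.zpowers g) = _
      rw [QuotientGroup.eq]; simp)
    (fun y => by simpa only [mul_smul] using act _ h0 y)
    (fun y => by simpa only [mul_smul] using act _ h5 y)
    (fun y => by simpa only [mul_smul] using act _ h1 y)
    (fun y => by simpa only [mul_smul] using act _ h4 y)
    (fun y => by simpa only [mul_smul] using act _ h3 y)
    (fun y => by simpa only [mul_smul] using act _ h2 y)
  change ((x * 1 : G) : G ⧸ Subgroup.zpowers g) = _ at key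
  rw [QuotientGroup.eq] at key
  simp only [mul_one, Subgroup.inv_mem_iff] at key
  obtain ⟨k, rfl⟩ := key
  have c5 : (g ^ k) ^ 5 = 1 := by
    rw [← zpow_natCast, ← zpow_mul, mul_comm, zpow_mul, zpow_natCast]
    simp only [pow_succ, pow_zero, one_mul, mul_assoc]
    rw [h5, one_zpow]
  have c3 : (g ^ k) ^ 3 = 1 := by simpa only [pow_succ, pow_zero, one_mul, mul_assoc] using h0
  have c1 : g ^ k = 1 := by
    calc g ^ k = (g ^ k) ^ 3 * (g ^ k) ^ 3 * ((g ^ k) ^ 5)⁻¹ := by group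
      _ = 1 := by rw [c3, c5]; simp
  simp only [c1, mul_one, one_mul] at h1
  calc g = g * (g * g) * (g * (g * g)) * (g * (g * (g * (g * g))))⁻¹ := by group
    _ = 1 := by rw [h5, h1]; simp

theorem collapse_seven {G : Type*} [Group G] (g x : G) (h7 : g ^ 7 = 1) (h0 : x ^ 3 = 1)
    (h1 : (g * x) ^ 3 = 1) (h2 : (g ^ 2 * x) ^ 4 = 1) (h3 : (g ^ 3 * x) ^ 3 = 1)
    (h4 : (g ^ 4 * x) ^ 4 = 1) (h6 : (g ^ 6 * x) ^ 4 = 1) : g = 1 := by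
  have e4 : g ^ 4 = g⁻¹ * g⁻¹ * g⁻¹ := by
    calc g ^ 4 = g ^ 7 * (g⁻¹ * g⁻¹ * g⁻¹) := by group
      _ = _ := by rw [h7, one_mul]
  have e6 : g ^ 6 = g⁻¹ := by
    calc g ^ 6 = g ^ 7 * g⁻¹ := by group
      _ = _ := by rw [h7, one_mul]
  rw [e4] at h4
  rw [e6] at h6
  simp only [pow_succ, pow_zero, one_mul, mul_assoc] at h7 h0 h1 h2 h3 h4 h6
  have act : ∀ (u : G), u = 1 → ∀ y : G ⧸ Subgroup.zpowers g, u • y = y := by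
    intro u hu y; rw [hu, one_smul]
  have key := collapse7 (X := G ⧸ Subgroup.zpowers g) (g • ·) (g⁻¹ • ·) (x • ·) (x⁻¹ • ·)
    ((1 : G) : G ⧸ Subgroup.zpowers g) (by simp) (by simp) (by simp) (by simp)
    (by
      change ((g * 1 : G) : G ⧸ Subgroup.zpowers g) = _
      rw [QuotientGroup.eq]; simp)
    (fun y => by simpa only [mul_smul] using act _ h0 y)
    (fun y => by simpa only [mul_smul] using act _ h1 y)
    (fun y => by simpa only [mul_smul] using act _ h7 y)
    (fun y => by simpa only [mul_smul] using act _ h6 y)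
    (fun y => by simpa only [mul_smul] using act _ h3 y)
    (fun y => by simpa only [mul_smul] using act _ h2 y)
    (fun y => by simpa only [mul_smul] using act _ h4 y)
  change ((x * 1 : G) : G ⧸ Subgroup.zpowers g) = _ at key
  rw [QuotientGroup.eq] at key
  simp only [mul_one, Subgroup.inv_mem_iff] at key
  obtain ⟨k, rfl⟩ := key
  have c7 : (g ^ k) ^ 7 = 1 := by
    rw [← zpow_natCast, ← zpow_mul, mul_comm, zpow_mul, zpow_natCast]
    simp only [pow_succ, pow_zero, one_mul, mul_assoc]
    rw [h7, one_zpow]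
  have c3 : (g ^ k) ^ 3 = 1 := by simpa only [pow_succ, pow_zero, one_mul, mul_assoc] using h0
  have c1 : g ^ k = 1 := by
    calc g ^ k = (g ^ k) ^ 7 * ((g ^ k) ^ 3 * (g ^ k) ^ 3)⁻¹ := by group
      _ = 1 := by rw [c3, c7]; simp
  simp only [c1, mul_one, one_mul] at h1
  calc g = g * (g * (g * (g * (g * (g * g))))) * (g * (g * g) * (g * (g * g)))⁻¹ := by group
    _ = 1 := by rw [h7, h1]; simp

/-! ### Cubes -/

theorem cube_expand {G : Type*} [Group G] (d x : G) (hx : x ^ 3 = 1) :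
    (d * x) ^ 3 = d * (x * d * x⁻¹) * (x * (x * d * x⁻¹) * x⁻¹) := by
  have : (d * x) ^ 3 = d * (x * d * x⁻¹) * (x * (x * d * x⁻¹) * x⁻¹) * x ^ 3 := by
    simp only [pow_succ, pow_zero, one_mul]; group
  rw [this, hx, mul_one]

/-- Parallelogram lemma. -/
theorem parallelogram {G : Type*} [Group G] (x d e : G) (hde : d * e = e * d)
    (h0 : x ^ 3 = 1) (h1 : (d * x) ^ 3 = 1) (h2 : (e * x) ^ 3 = 1) (h3 : (d * e * x) ^ 3 = 1) :
    Commute d (x * e * x⁻¹) := by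
  rw [cube_expand _ _ h0] at h1 h2 h3
  set e1 := x * e * x⁻¹ with he1
  set d1 := x * d * x⁻¹ with hd1
  set e2 := x * e1 * x⁻¹ with he2
  set d2 := x * d1 * x⁻¹ with hd2
  have k1 : x * (d * e) * x⁻¹ = e1 * d1 := by
    rw [hde, he1, hd1]; group
  have k2 : x * (e1 * d1) * x⁻¹ = d2 * e2 := by
    have : e1 * d1 = d1 * e1 := by
      rw [he1, hd1]
      calc x * e * x⁻¹ * (x * d * x⁻¹) = x * (e * d) * x⁻¹ := by group
        _ = x * (d * e) * x⁻¹ := by rw [hde]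
        _ = _ := by group
    rw [this, hd2, he2]; group
  rw [k1, k2] at h3
  have a1 : d1 * d2 = d⁻¹ := by
    rw [eq_inv_iff_mul_eq_one]
    calc d1 * d2 * d = d⁻¹ * (d * d1 * d2) * d := by group
      _ = 1 := by rw [h1]; group
  have a2 : e2 = (e * e1)⁻¹ := by
    rw [eq_inv_iff_mul_eq_one]
    calc e2 * (e * e1) = (e * e1)⁻¹ * (e * e1 * e2) * (e * e1) := by group
      _ = 1 := by rw [h2]; group
  have a3 : d * e * (e1 * d1) * (d2 * e2) = d * e * e1 * (d1 * d2) * e2 := by group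
  rw [a3, a1, a2] at h3
  change d * e1 = e1 * d
  have h4 : d * e * e1 * d⁻¹ = e * e1 := by
    have := mul_eq_one_iff_eq_inv.mp h3
    rwa [inv_inv] at this
  rw [hde] at h4
  calc d * e1 = e⁻¹ * (e * d * e1 * d⁻¹) * d := by group
    _ = e1 * d := by rw [h4]; group

theorem cube_pm {G : Type*} [Group G] (x y : G) (h0 : x ^ 3 = 1) (h1 : (y * x) ^ 3 = 1)
    (h2 : (y⁻¹ * x) ^ 3 = 1) : Commute y (x * y * x⁻¹) := by
  have := parallelogram x y y⁻¹ (by simp) h0 h1 h2 (by simpa using h0)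
  have h := this.inv_right
  have e : (x * y⁻¹ * x⁻¹)⁻¹ = x * y * x⁻¹ := by group
  rwa [e] at h

/-- If `d` commutes with its conjugate, then one cube gives all. -/
theorem cube_pow {G : Type*} [Group G] (x d : G) (h0 : x ^ 3 = 1) (h1 : (d * x) ^ 3 = 1)
    (hc : Commute d (x * d * x⁻¹)) (k : ℕ) : (d ^ k * x) ^ 3 = 1 := by
  rw [cube_expand _ _ h0] at h1 ⊢
  have e1 : x * d ^ k * x⁻¹ = (x * d * x⁻¹) ^ k := conj_pow.symm
  have e2 : x * (x * d * x⁻¹) ^ k * x⁻¹ = (x * (x * d * x⁻¹) * x⁻¹) ^ k :=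
    conj_pow.symm
  rw [e1, e2, ← hc.mul_pow]
  have a : x * (x * d * x⁻¹) * x⁻¹ = (d * (x * d * x⁻¹))⁻¹ := by
    rw [eq_inv_iff_mul_eq_one]
    exact mul_eq_one_comm.mp h1
  rw [a, inv_pow, mul_inv_cancel]

/-! ### Powers indexed by `ZMod p` -/

/-- `g ^ i` for `i : ZMod p`. -/
def zp {G : Type*} [Group G] {p : ℕ} (g : G) (i : ZMod p) : G := g ^ i.val

theorem zp_add {G : Type*} [Group G] {p : ℕ} [NeZero p] {g : G} (hg : g ^ p = 1) (i j : ZMod p) :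
    zp g (i + j) = zp g i * zp g j := by
  unfold zp
  rw [ZMod.val_add, ← pow_add, ← pow_eq_pow_mod _ hg]

theorem zp_zero {G : Type*} [Group G] {p : ℕ} (g : G) : zp g (0 : ZMod p) = 1 := by
  simp [zp]

theorem zp_natCast {G : Type*} [Group G] {p : ℕ} {g : G} (hg : g ^ p = 1) (k : ℕ) :
    zp g (k : ZMod p) = g ^ k := by
  unfold zp
  rw [ZMod.val_natCast, ← pow_eq_pow_mod _ hg]

theorem zp_mul {G : Type*} [Group G] {p : ℕ} [NeZero p] {g : G} (hg : g ^ p = 1) (i j : ZMod p) :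
    zp g (i * j) = zp (zp g i) j := by
  unfold zp
  rw [ZMod.val_mul, ← pow_mul, ← pow_eq_pow_mod _ hg]

theorem zp_pow_p {G : Type*} [Group G] {p : ℕ} {g : G} (hg : g ^ p = 1) (i : ZMod p) :
    (zp g i) ^ p = 1 := by
  unfold zp
  rw [← pow_mul, mul_comm, pow_mul, hg, one_pow]

theorem zp_eq_one {G : Type*} [Group G] {p : ℕ} [Fact p.Prime] {g : G} (hg : g ^ p = 1)
    (hg1 : g ≠ 1) {i : ZMod p} (h : zp g i = 1) : i = 0 := by
  by_contra hi
  apply hg1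
  have : zp g (i * i⁻¹) = 1 := by rw [zp_mul hg, h]; simp [zp]
  rw [mul_inv_cancel₀ hi] at this
  have h1 := zp_natCast (p := p) hg 1
  simpa [this] using h1.symm

/-- Nontrivial powers generate. -/
theorem commute_of_zp {G : Type*} [Group G] {p : ℕ} [Fact p.Prime] {g y : G} (hg : g ^ p = 1)
    {i : ZMod p} (hi : i ≠ 0) (h : Commute (zp g i) y) : Commute g y := by
  have h1 : zp g (i * i⁻¹) = g := by
    rw [mul_inv_cancel₀ hi]
    simpa using zp_natCast (p := p) hg 1
  rw [← h1, zp_mul hg]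
  exact h.pow_left _

/-! ### Weights and the line lemma -/

/-- The weight of an element order. -/
def wt (k : ℕ) : ℚ := if k = 2 then 0 else 4 - k

/-- The density bound. -/
def kap (p : ℕ) : ℚ := if p = 5 then 1 / 5 else if p = 7 then 2 / 7 else 4 / 13

open Classical in
theorem wt_le {G : Type*} [Group G] [Finite G] (y : G) (hy : y ≠ 1) :
    wt (orderOf y) ≤ if y ^ 3 = 1 then 1 else if y ^ 4 = 1 then 0 else -1 := by
  have hpos : 0 < orderOf y := orderOf_pos y
  have h1 : orderOf y ≠ 1 := fun h => hy (orderOf_eq_one_iff.mp h)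
  unfold wt
  by_cases h2 : orderOf y = 2
  · have h4 : y ^ 4 = 1 := orderOf_dvd_iff_pow_eq_one.mp (by rw [h2]; norm_num)
    rw [if_pos h2, if_pos h4]
    split_ifs <;> norm_num
  rw [if_neg h2]
  by_cases h3 : y ^ 3 = 1
  · rw [if_pos h3]
    have : (3 : ℚ) ≤ orderOf y := by exact_mod_cast (by omega : 3 ≤ orderOf y)
    linarith
  rw [if_neg h3]
  have n3 : orderOf y ≠ 3 := fun h => h3 (by rw [← h]; exact pow_orderOf_eq_one y)
  by_cases h4 : y ^ 4 = 1
  · rw [if_pos h4]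
    have : (4 : ℚ) ≤ orderOf y := by exact_mod_cast (by omega : 4 ≤ orderOf y)
    linarith
  · rw [if_neg h4]
    have n4 : orderOf y ≠ 4 := fun h => h4 (by rw [← h]; exact pow_orderOf_eq_one y)
    have : (5 : ℚ) ≤ orderOf y := by exact_mod_cast (by omega : 5 ≤ orderOf y)
    linarith

theorem line_full {G : Type*} [Group G] {p : ℕ} [Fact p.Prime] {g : G} (hg : g ^ p = 1)
    (x : G) {a b δ : ZMod p} (hab : a ≠ b) (hδ : δ ≠ 0)
    (h1 : (zp g a * x) ^ 3 = 1) (h2 : (zp g (a + δ) * x) ^ 3 = 1)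
    (h3 : (zp g b * x) ^ 3 = 1) (h4 : (zp g (b + δ) * x) ^ 3 = 1) :
    Commute g (x * g * x⁻¹) ∧ ∀ i : ZMod p, (zp g i * x) ^ 3 = 1 := by
  have e : ∀ i, zp g i * x = zp g (i - a) * (zp g a * x) := by
    intro i; rw [← mul_assoc, ← zp_add hg]; simp
  rw [e] at h2 h3 h4
  set x0 := zp g a * x with hx0
  have c1 : zp g (a + δ - a) = zp g δ := by congr 1; ring
  have c2 : zp g (b + δ - a) = zp g δ * zp g (b - a) := by
    rw [← zp_add hg]; congr 1; ring
  rw [c1] at h2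
  rw [c2] at h4
  have key := parallelogram x0 (zp g δ) (zp g (b - a))
    (by rw [← zp_add hg, ← zp_add hg, add_comm]) h1 h2 h3 h4
  have k1 : Commute g (x0 * zp g (b - a) * x0⁻¹) := commute_of_zp hg hδ key
  have k2 : x0 * zp g (b - a) * x0⁻¹ = zp (x0 * g * x0⁻¹) (b - a) := conj_pow.symm
  have hg0 : (x0 * g * x0⁻¹) ^ p = 1 := by rw [conj_pow, hg]; group
  rw [k2] at k1
  have k3 : Commute g (x0 * g * x0⁻¹) :=
    (commute_of_zp hg0 (sub_ne_zero.mpr hab.symm) k1.symm).symm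
  have hga : Commute (zp g a) g := (Commute.refl g).pow_left _
  refine ⟨?_, fun i => ?_⟩
  · have k4 : x0 * g * x0⁻¹ = zp g a * (x * g * x⁻¹) * (zp g a)⁻¹ := by rw [hx0]; group
    rw [k4] at k3
    have k5 : g = zp g a * g * (zp g a)⁻¹ := by rw [hga.eq]; group
    have k6 : Commute (zp g a * g * (zp g a)⁻¹) (zp g a * (x * g * x⁻¹) * (zp g a)⁻¹) := by
      rw [← k5]; exact k3
    exact (Commute.conj_iff (zp g a)).mp k6
  · rw [e]
    have h2' : ((zp g δ) * x0) ^ 3 = 1 := h2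
    have hcd : Commute (zp g δ) (x0 * zp g δ * x0⁻¹) := by
      have : x0 * zp g δ * x0⁻¹ = (x0 * g * x0⁻¹) ^ δ.val := conj_pow.symm
      rw [this]
      exact k3.pow_pow _ _
    have := cube_pow x0 (zp g δ) h1 h2' hcd (δ⁻¹ * (i - a)).val
    have e2 : zp g δ ^ (δ⁻¹ * (i - a)).val = zp g (i - a) := by
      change zp (zp g δ) (δ⁻¹ * (i - a)) = _
      rw [← zp_mul hg, mul_inv_cancel_left₀ hδ]
    rwa [e2] at this

theorem line_sidon {G : Type*} [Group G] {p : ℕ} [Fact p.Prime] {g : G} (hg : g ^ p = 1)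
    (x : G) (hnf : ¬ ∀ i : ZMod p, (zp g i * x) ^ 3 = 1) (T : Finset (ZMod p))
    (hT : ∀ i ∈ T, (zp g i * x) ^ 3 = 1) : T.card * T.card - T.card ≤ p - 1 := by
  rw [← Finset.offDiag_card]
  have hc : (Finset.univ.erase (0 : ZMod p)).card = p - 1 := by
    rw [Finset.card_erase_of_mem (Finset.mem_univ _), Finset.card_univ, ZMod.card]
  rw [← hc]
  apply Finset.card_le_card_of_injOn (fun q => q.2 - q.1)
  · rintro ⟨a, b⟩ hq
    simp only [Finset.coe_offDiag, Set.mem_offDiag, Finset.mem_coe] at hq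
    simp [sub_eq_zero, Ne.symm hq.2.2]
  · rintro ⟨a, b⟩ hq ⟨a', b'⟩ hq' h
    simp only [Finset.coe_offDiag, Set.mem_offDiag, Finset.mem_coe] at hq hq' h
    have haa : a = a' := by
      by_contra hne
      apply hnf
      have e1 : a + (b - a) = b := by ring
      have e2 : a' + (b - a) = b' := by rw [h]; ring
      exact (line_full hg x hne (sub_ne_zero.mpr hq.2.2.symm) (hT a hq.1)
        (by rw [e1]; exact hT b hq.2.1) (hT a' hq'.1) (by rw [e2]; exact hT b' hq'.2.1)).2
    subst haa
    have : b = b' := by simpa using h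
    rw [this]

theorem zmod5_pair : ∀ T : Finset (ZMod 5), T.card = 2 →
    ∃ c u : ZMod 5, u ≠ 0 ∧ c ∈ T ∧ c + u ∈ T ∧ c + 2 * u ∉ T ∧ c + 3 * u ∉ T ∧ c + 4 * u ∉ T := by
  decide

theorem zmod7_triple : ∀ T : Finset (ZMod 7), T.card = 3 →
    (∀ a ∈ T, ∀ b ∈ T, ∀ d : ZMod 7, d ≠ 0 ∧ a + d ∈ T ∧ b + d ∈ T → a = b) →
    ∃ c u : ZMod 7, u ≠ 0 ∧ c ∈ T ∧ c + u ∈ T ∧ c + 2 * u ∉ T ∧ c + 3 * u ∈ T ∧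
      c + 4 * u ∉ T ∧ c + 6 * u ∉ T := by
  set_option maxRecDepth 100000 in
  set_option synthInstance.maxSize 1000 in
  set_option synthInstance.maxHeartbeats 1000000 in
  decide

open Classical in
theorem line_bound {G : Type*} [Group G] [Finite G] {p : ℕ} [Fact p.Prime] (hp : 5 ≤ p)
    {g : G} (hg : g ^ p = 1) (hg1 : g ≠ 1) (x : G)
    (hnf : ¬ ∀ i : ZMod p, (zp g i * x) ^ 3 = 1) :
    ∑ i : ZMod p, wt (orderOf (zp g i * x)) ≤ kap p * p := by
  have hkap : 0 < kap p := by unfold kap; split_ifs <;> norm_num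
  have hp0 : (5 : ℚ) ≤ p := by exact_mod_cast hp
  by_cases hid : ∃ i0 : ZMod p, zp g i0 * x = 1
  · obtain ⟨i0, hi0⟩ := hid
    have hle : ∀ i ∈ (Finset.univ.erase i0 : Finset (ZMod p)), wt (orderOf (zp g i * x)) ≤ -1 := by
      intro i hi
      have hne : i - i0 ≠ 0 := sub_ne_zero.mpr (Finset.ne_of_mem_erase hi)
      have e : zp g i * x = zp g (i - i0) := by
        have : zp g i = zp g (i - i0) * zp g i0 := by rw [← zp_add hg]; simp
        rw [this, mul_assoc, hi0, mul_one]
      have ho : orderOf (zp g i * x) = p := by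
        rw [e]
        exact orderOf_eq_prime (zp_pow_p hg _) (fun h => hne (zp_eq_one hg hg1 h))
      rw [ho, wt, if_neg (by omega)]
      linarith
    rw [← Finset.add_sum_erase _ _ (Finset.mem_univ i0)]
    have h1 := Finset.sum_le_sum hle
    rw [Finset.sum_const, Finset.card_erase_of_mem (Finset.mem_univ _), Finset.card_univ,
      ZMod.card, nsmul_eq_mul, Nat.cast_sub (by omega)] at h1
    have h2 : wt (orderOf (zp g i0 * x)) = 3 := by
      rw [hi0, orderOf_one, wt]; norm_num
    rw [h2]
    have : 0 ≤ kap p * p := by positivity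
    push_cast at h1
    linarith
  push Not at hid
  set T : Finset (ZMod p) := Finset.univ.filter (fun i => (zp g i * x) ^ 3 = 1) with hTdef
  have memT : ∀ i, i ∈ T ↔ (zp g i * x) ^ 3 = 1 := by intro i; simp [hTdef]
  have hT : ∀ i ∈ T, (zp g i * x) ^ 3 = 1 := fun i hi => (memT i).mp hi
  have hsid := line_sidon hg x hnf T hT
  set B : Finset (ZMod p) := Finset.univ.filter
    (fun i => ¬ (zp g i * x) ^ 3 = 1 ∧ ¬ (zp g i * x) ^ 4 = 1) with hBdef
  have hsum : ∑ i : ZMod p, wt (orderOf (zp g i * x)) ≤ (T.card : ℚ) - B.card := by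
    have : ∀ i ∈ (Finset.univ : Finset (ZMod p)), wt (orderOf (zp g i * x)) ≤
        (if (zp g i * x) ^ 3 = 1 then 1 else 0) -
        (if ¬ (zp g i * x) ^ 3 = 1 ∧ ¬ (zp g i * x) ^ 4 = 1 then 1 else 0) := by
      intro i _
      have := wt_le _ (hid i)
      by_cases h3 : (zp g i * x) ^ 3 = 1 <;> by_cases h4 : (zp g i * x) ^ 4 = 1 <;>
        simp only [h3, h4, if_true, if_false, not_true, not_false_eq_true, and_true, and_false,
          true_and, false_and] at this ⊢ <;> linarith
    refine (Finset.sum_le_sum this).trans (le_of_eq ?_)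
    rw [Finset.sum_sub_distrib, Finset.sum_boole, Finset.sum_boole]
  -- the rescaled line
  have resc : ∀ (c u : ZMod p) (k : ℕ), zp g (c + (k : ZMod p) * u) * x = (zp g u) ^ k * (zp g c * x) := by
    intro c u k
    rw [← mul_assoc]
    congr 1
    rw [← zp_natCast (p := p) (zp_pow_p hg u) k, ← zp_mul hg, ← zp_add hg]
    congr 1; ring
  rcases eq_or_ne p 5 with h5 | h5
  · subst h5
    have hk : kap 5 * (5 : ℕ) = 1 := by norm_num [kap]
    rw [hk]
    have hc2 : T.card ≤ 2 := by
      by_contra hcon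
      have : 3 ≤ T.card := by omega
      have : 3 * T.card ≤ T.card * T.card := Nat.mul_le_mul_right _ this
      omega
    have hfin : T.card ≤ 1 + B.card := by
      by_contra hcon
      have hcard : T.card = 2 := by omega
      have hB : B = ∅ := Finset.card_eq_zero.mp (by omega)
      obtain ⟨c, u, hu, m0, m1, m2, m3, m4⟩ := zmod5_pair T hcard
      have four : ∀ i, i ∉ T → (zp g i * x) ^ 4 = 1 := by
        intro i hi
        by_contra h4
        have : i ∈ B := by
          rw [hBdef, Finset.mem_filter]
          exact ⟨Finset.mem_univ _, fun h => hi ((memT i).mpr h), h4⟩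
        rw [hB] at this
        exact absurd this (Finset.notMem_empty _)
      have r1 := resc c u 1
      have r2 := resc c u 2
      have r3 := resc c u 3
      have r4 := resc c u 4
      push_cast at r1 r2 r3 r4
      rw [one_mul, pow_one] at r1
      have := collapse_five (zp g u) (zp g c * x) (zp_pow_p hg u) (hT _ m0)
        (by rw [← r1]; exact hT _ m1) (by rw [← r2]; exact four _ m2)
        (by rw [← r3]; exact four _ m3) (by rw [← r4]; exact four _ m4)
      exact hu (zp_eq_one hg hg1 this)
    have : (T.card : ℚ) ≤ 1 + B.card := by exact_mod_cast hfin
    linarith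
  rcases eq_or_ne p 7 with h7 | h7
  · subst h7
    have hk : kap 7 * (7 : ℕ) = 2 := by norm_num [kap]
    rw [hk]
    have hc2 : T.card ≤ 3 := by
      by_contra hcon
      have : 4 ≤ T.card := by omega
      have : 4 * T.card ≤ T.card * T.card := Nat.mul_le_mul_right _ this
      omega
    have hfin : T.card ≤ 2 + B.card := by
      by_contra hcon
      have hcard : T.card = 3 := by omega
      have hB : B = ∅ := Finset.card_eq_zero.mp (by omega)
      obtain ⟨c, u, hu, m0, m1, m2, m3, m4, m6⟩ := zmod7_triple T hcard (by
        rintro a ha b hb d ⟨hd, had, hbd⟩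
        by_contra hne
        exact hnf (line_full hg x hne hd (hT _ ha) (hT _ had) (hT _ hb) (hT _ hbd)).2)
      have four : ∀ i, i ∉ T → (zp g i * x) ^ 4 = 1 := by
        intro i hi
        by_contra h4
        have : i ∈ B := by
          rw [hBdef, Finset.mem_filter]
          exact ⟨Finset.mem_univ _, fun h => hi ((memT i).mpr h), h4⟩
        rw [hB] at this
        exact absurd this (Finset.notMem_empty _)
      have r1 := resc c u 1
      have r2 := resc c u 2
      have r3 := resc c u 3
      have r4 := resc c u 4
      have r6 := resc c u 6
      push_cast at r1 r2 r3 r4 r6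
      rw [one_mul, pow_one] at r1
      have := collapse_seven (zp g u) (zp g c * x) (zp_pow_p hg u) (hT _ m0)
        (by rw [← r1]; exact hT _ m1) (by rw [← r2]; exact four _ m2)
        (by rw [← r3]; exact hT _ m3) (by rw [← r4]; exact four _ m4)
        (by rw [← r6]; exact four _ m6)
      exact hu (zp_eq_one hg hg1 this)
    have : (T.card : ℚ) ≤ 2 + B.card := by exact_mod_cast hfin
    linarith
  · have hp11 : 11 ≤ p := by
      by_contra hcon
      have hpr : p.Prime := Fact.out
      interval_cases p <;> first | omega | (revert hpr; norm_num)
    have hk : kap p = 4 / 13 := by unfold kap; rw [if_neg h5, if_neg h7]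
    rw [hk]
    have hfin : 13 * T.card ≤ 4 * p := by
      rcases Nat.lt_or_ge T.card 4 with h | h
      · omega
      · have h1 : 4 * T.card ≤ T.card * T.card := Nat.mul_le_mul_right _ h
        rcases Nat.lt_or_ge T.card 5 with h' | h'
        · have : T.card = 4 := by omega
          rw [this] at hsid ⊢
          omega
        · have h1 : 5 * T.card ≤ T.card * T.card := Nat.mul_le_mul_right _ h'
          omega
    have h13 : (13 : ℚ) * T.card ≤ 4 * p := by exact_mod_cast hfin
    have hB0 : (0 : ℚ) ≤ B.card := by positivity
    linarith

theorem commute_of_conj {G : Type*} [Group G] {d u y : G} (h : Commute d u)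
    (hc : Commute d (u * y * u⁻¹)) : Commute d y := by
  have k5 : d = u * d * u⁻¹ := by rw [← h.eq]; group
  have k6 : Commute (u * d * u⁻¹) (u * y * u⁻¹) := by rw [← k5]; exact hc
  exact (Commute.conj_iff u).mp k6

open Classical in
/-- Bound on a coset of a rank two group which does not commute with its conjugate. -/
theorem plane_bound {G : Type*} [Group G] [Finite G] {p : ℕ} [Fact p.Prime] (hp : 5 ≤ p)
    {d e : G} (hd : d ^ p = 1) (he : e ^ p = 1) (hde : Commute d e) (x : G)
    (hnc : ¬ Commute d (x * e * x⁻¹)) :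
    ∑ j : ZMod p, ∑ i : ZMod p, wt (orderOf (zp d i * (zp e j * x))) ≤ kap p * p * p := by
  have hd1 : d ≠ 1 := by rintro rfl; exact hnc (Commute.one_left _)
  have he1 : e ≠ 1 := by rintro rfl; exact hnc (by simp)
  have hzz : ∀ i j : ZMod p, Commute (zp d i) (zp e j) := fun i j => hde.pow_pow _ _
  have hsumle : ∀ f : ZMod p → ℚ, (∀ j, f j ≤ kap p * p) → ∑ j, f j ≤ kap p * p * p := by
    intro f hf
    refine (Finset.sum_le_sum (fun j _ => hf j)).trans (le_of_eq ?_)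
    rw [Finset.sum_const, Finset.card_univ, ZMod.card, nsmul_eq_mul]; ring
  -- direction d
  by_cases hD : ∀ j : ZMod p, ¬ ∀ i : ZMod p, (zp d i * (zp e j * x)) ^ 3 = 1
  · exact hsumle _ (fun j => line_bound hp hd hd1 _ (hD j))
  push Not at hD
  obtain ⟨j0, hj0⟩ := hD
  -- direction e
  by_cases hE : ∀ i : ZMod p, ¬ ∀ j : ZMod p, (zp e j * (zp d i * x)) ^ 3 = 1
  · rw [Finset.sum_comm]
    refine hsumle _ (fun i => ?_)
    have := line_bound hp he he1 _ (hE i)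
    refine le_trans (le_of_eq ?_) this
    refine Finset.sum_congr rfl (fun j _ => ?_)
    rw [← mul_assoc, ← mul_assoc, (hzz i j).eq]
  push Not at hE
  obtain ⟨i1, hi1⟩ := hE
  -- direction d * e
  have hf : (d * e) ^ p = 1 := by rw [hde.mul_pow, hd, he, one_mul]
  have hcd : Commute d (x * d * x⁻¹) := by
    have h01 : (0 : ZMod p) ≠ 1 := zero_ne_one
    have := (line_full hd (zp e j0 * x) h01 h01.symm (hj0 _) (hj0 _) (hj0 _) (hj0 _)).1
    have e1 : zp e j0 * x * d * (zp e j0 * x)⁻¹ = zp e j0 * (x * d * x⁻¹) * (zp e j0)⁻¹ := by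
      group
    rw [e1] at this
    exact commute_of_conj (hde.pow_right _) this
  have hf1 : d * e ≠ 1 := by
    intro h
    have : e = d⁻¹ := (inv_eq_of_mul_eq_one_right h).symm
    apply hnc
    have e2 : x * e * x⁻¹ = (x * d * x⁻¹)⁻¹ := by rw [this]; group
    rw [e2]
    exact hcd.inv_right
  have hzf : ∀ k c : ZMod p, zp (d * e) k * (zp d c * x) = zp d (c + k) * (zp e k * x) := by
    intro k c
    have : zp (d * e) k = zp d k * zp e k := hde.mul_pow _
    rw [this, zp_add hd, ← mul_assoc, ← mul_assoc, mul_assoc (zp d k), ← (hzz c k).eq,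
      ← mul_assoc, ← zp_add hd, ← zp_add hd, add_comm]
  by_cases hF : ∀ c : ZMod p, ¬ ∀ k : ZMod p, (zp (d * e) k * (zp d c * x)) ^ 3 = 1
  · have h1 : ∑ j : ZMod p, ∑ i : ZMod p, wt (orderOf (zp d i * (zp e j * x))) =
        ∑ c : ZMod p, ∑ k : ZMod p, wt (orderOf (zp (d * e) k * (zp d c * x))) := by
      rw [Finset.sum_comm (s := (Finset.univ : Finset (ZMod p))) (t := Finset.univ)
        (f := fun c k => wt (orderOf (zp (d * e) k * (zp d c * x))))]
      refine Finset.sum_congr rfl (fun j _ => ?_)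
      simp only [hzf]
      exact (Equiv.sum_comp (Equiv.addRight j)
        (fun i => wt (orderOf (zp d i * (zp e j * x))))).symm
    rw [h1]
    exact hsumle _ (fun c => line_bound hp hf hf1 _ (hF c))
  push Not at hF
  obtain ⟨c2, hc2⟩ := hF
  exfalso
  apply hnc
  obtain ⟨j, hj, hji⟩ : ∃ j : ZMod p, j ≠ j0 ∧ c2 + j ≠ i1 := by
    have h1 : (1 : ZMod p) ≠ 0 := one_ne_zero
    by_cases h : c2 + (j0 + 1) = i1
    · refine ⟨j0 - 1, by simp, ?_⟩
      intro h'
      have h2 : ((2 : ℕ) : ZMod p) = 0 := by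
        push_cast
        have := h.trans h'.symm
        linear_combination this
      have := (ZMod.natCast_eq_zero_iff 2 p).mp h2
      have := Nat.le_of_dvd (by norm_num) this
      omega
    · exact ⟨j0 + 1, by simp, h⟩
  set x0 := zp d i1 * (zp e j0 * x) with hx0
  have c1 := hj0 i1
  have q2 : (zp d (c2 + j - i1) * x0) ^ 3 = 1 := by
    have := hj0 (c2 + j)
    have e1 : zp d (c2 + j) = zp d (c2 + j - i1) * zp d i1 := by rw [← zp_add hd]; simp
    rwa [e1, mul_assoc] at this
  have ej : zp e j = zp e (j - j0) * zp e j0 := by rw [← zp_add he]; simp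
  have q3 : (zp e (j - j0) * x0) ^ 3 = 1 := by
    have := hi1 j
    have e2 : zp e j * (zp d i1 * x) = zp e (j - j0) * x0 := by
      rw [hx0, ej]
      simp only [← mul_assoc]
      rw [mul_assoc (zp e (j - j0)) (zp d i1), (hzz i1 j0).eq]
      simp only [← mul_assoc]
    rwa [e2] at this
  have q4 : (zp d (c2 + j - i1) * zp e (j - j0) * x0) ^ 3 = 1 := by
    have := hc2 j
    rw [hzf] at this
    have e1 : zp d (c2 + j) = zp d (c2 + j - i1) * zp d i1 := by rw [← zp_add hd]; simp
    have e2 : zp d (c2 + j) * (zp e j * x) = zp d (c2 + j - i1) * zp e (j - j0) * x0 := by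
      rw [hx0, ej, e1]
      simp only [← mul_assoc]
      rw [mul_assoc (zp d (c2 + j - i1)) (zp d i1), (hzz i1 (j - j0)).eq]
      simp only [← mul_assoc]
    rwa [e2] at this
  have key := parallelogram x0 (zp d (c2 + j - i1)) (zp e (j - j0)) (hzz _ _).eq c1 q2 q3 q4
  have k1 : Commute d (x0 * zp e (j - j0) * x0⁻¹) := commute_of_zp hd (sub_ne_zero.mpr hji) key
  have k2 : x0 * zp e (j - j0) * x0⁻¹ =
      (zp d i1 * zp e j0) * (x * zp e (j - j0) * x⁻¹) * (zp d i1 * zp e j0)⁻¹ := by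
    rw [hx0]; group
  rw [k2] at k1
  have k3 := commute_of_conj (((Commute.refl d).pow_right _).mul_right (hde.pow_right _)) k1
  have k4 : x * zp e (j - j0) * x⁻¹ = zp (x * e * x⁻¹) (j - j0) := conj_pow.symm
  rw [k4] at k3
  have he0 : (x * e * x⁻¹) ^ p = 1 := by rw [conj_pow, he]; group
  exact (commute_of_zp he0 (sub_ne_zero.mpr hj) k3.symm).symm

/-- Elementary abelian `p`-subgroups. -/
def ElemAb {G : Type*} [Group G] (p : ℕ) (H : Subgroup G) : Prop :=
  (∀ h ∈ H, h ^ p = 1) ∧ ∀ a ∈ H, ∀ b ∈ H, Commute a b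

open Classical in
theorem sum_coset_le {G : Type*} [Group G] [Finite G] {p : ℕ} [Fact p.Prime] (hp : 5 ≤ p)
    {H : Subgroup G} [Fintype H] {g : G} (hgH : g ∈ H) (hg : g ^ p = 1) (hg1 : g ≠ 1) (x : G)
    (hnf : ∀ h ∈ H, ¬ ∀ i : ZMod p, (zp g i * (h * x)) ^ 3 = 1) :
    ∑ h : H, wt (orderOf ((h : G) * x)) ≤ kap p * Fintype.card H := by
  have hp0 : (0 : ℚ) < p := by exact_mod_cast (by omega : 0 < p)
  have hz : ∀ i : ZMod p, zp g i ∈ H := fun i => H.pow_mem hgH _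
  have h1 : ∀ i : ZMod p, ∑ h : H, wt (orderOf (zp g i * ((h : G) * x))) =
      ∑ h : H, wt (orderOf ((h : G) * x)) := by
    intro i
    have := Equiv.sum_comp (Equiv.mulLeft (⟨zp g i, hz i⟩ : H))
      (fun h : H => wt (orderOf ((h : G) * x)))
    rw [← this]
    refine Finset.sum_congr rfl (fun h _ => ?_)
    simp [mul_assoc]
  have h2 : (p : ℚ) * ∑ h : H, wt (orderOf ((h : G) * x)) =
      ∑ h : H, ∑ i : ZMod p, wt (orderOf (zp g i * ((h : G) * x))) := by
    rw [Finset.sum_comm]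
    simp only [h1]
    rw [Finset.sum_const, Finset.card_univ, ZMod.card, nsmul_eq_mul]
  have h3 : ∑ h : H, ∑ i : ZMod p, wt (orderOf (zp g i * ((h : G) * x))) ≤
      ∑ _h : H, kap p * p :=
    Finset.sum_le_sum (fun h _ => line_bound hp hg hg1 _ (hnf h h.2))
  rw [Finset.sum_const, Finset.card_univ, nsmul_eq_mul, ← h2] at h3
  have : (p : ℚ) * ∑ h : H, wt (orderOf ((h : G) * x)) ≤ p * (kap p * Fintype.card H) := by
    linarith
  exact le_of_mul_le_mul_left this hp0

open Classical in
theorem sum_coset_le' {G : Type*} [Group G] [Finite G] {p : ℕ} [Fact p.Prime] (hp : 5 ≤ p)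
    {H : Subgroup G} [Fintype H] (hH : ElemAb p H) {d e : G} (hd : d ∈ H) (he : e ∈ H) (x : G)
    (hnc : ¬ Commute d (x * e * x⁻¹)) :
    ∑ h : H, wt (orderOf ((h : G) * x)) ≤ kap p * Fintype.card H := by
  have hp0 : (0 : ℚ) < p := by exact_mod_cast (by omega : 0 < p)
  have h1 : ∀ j i : ZMod p, ∑ h : H, wt (orderOf (zp d i * (zp e j * ((h : G) * x)))) =
      ∑ h : H, wt (orderOf ((h : G) * x)) := by
    intro j i
    have := Equiv.sum_comp (Equiv.mulLeft (⟨zp d i * zp e j,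
      H.mul_mem (H.pow_mem hd _) (H.pow_mem he _)⟩ : H))
      (fun h : H => wt (orderOf ((h : G) * x)))
    rw [← this]
    refine Finset.sum_congr rfl (fun h _ => ?_)
    simp [mul_assoc]
  have h2 : (p : ℚ) * (p * ∑ h : H, wt (orderOf ((h : G) * x))) =
      ∑ h : H, ∑ j : ZMod p, ∑ i : ZMod p,
        wt (orderOf (zp d i * (zp e j * ((h : G) * x)))) := by
    rw [Finset.sum_comm]
    have : ∀ j : ZMod p, ∑ h : H, ∑ i : ZMod p,
        wt (orderOf (zp d i * (zp e j * ((h : G) * x)))) =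
        p * ∑ h : H, wt (orderOf ((h : G) * x)) := by
      intro j
      rw [Finset.sum_comm]
      simp only [h1]
      rw [Finset.sum_const, Finset.card_univ, ZMod.card, nsmul_eq_mul]
    simp only [this]
    rw [Finset.sum_const, Finset.card_univ, ZMod.card, nsmul_eq_mul]
  have h3 : ∑ h : H, ∑ j : ZMod p, ∑ i : ZMod p,
        wt (orderOf (zp d i * (zp e j * ((h : G) * x)))) ≤ ∑ _h : H, kap p * p * p := by
    refine Finset.sum_le_sum (fun h _ => plane_bound hp (hH.1 d hd) (hH.1 e he)
      (hH.2 d hd e he) _ (fun hc => hnc ?_))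
    have e1 : (h : G) * x * e * ((h : G) * x)⁻¹ = h * (x * e * x⁻¹) * (h : G)⁻¹ := by group
    rw [e1] at hc
    exact commute_of_conj (hH.2 d hd h h.2) hc
  rw [Finset.sum_const, Finset.card_univ, nsmul_eq_mul, ← h2] at h3
  have : (p : ℚ) * (p * ∑ h : H, wt (orderOf ((h : G) * x))) ≤
      p * (p * (kap p * Fintype.card H)) := by linarith
  exact le_of_mul_le_mul_left (le_of_mul_le_mul_left this hp0) hp0

theorem mem_normalizer_of_commute {G : Type*} [Group G] [Finite G] {p : ℕ}
    {H : Subgroup G} (hH : ElemAb p H) (hmax : ∀ K : Subgroup G, ElemAb p K → H ≤ K → K = H)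
    (x : G) (hc : ∀ d ∈ H, ∀ e ∈ H, Commute d (x * e * x⁻¹)) :
    ∀ e ∈ H, x * e * x⁻¹ ∈ H := by
  intro e he
  set K : Subgroup G :=
    { carrier := {y | ∃ a ∈ H, ∃ b ∈ H, y = a * (x * b * x⁻¹)}
      one_mem' := ⟨1, H.one_mem, 1, H.one_mem, by group⟩
      mul_mem' := by
        rintro _ _ ⟨a, ha, b, hb, rfl⟩ ⟨a', ha', b', hb', rfl⟩
        refine ⟨a * a', H.mul_mem ha ha', b * b', H.mul_mem hb hb', ?_⟩
        have := (hc a' ha' b hb).eq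
        calc a * (x * b * x⁻¹) * (a' * (x * b' * x⁻¹))
            = a * ((x * b * x⁻¹) * a') * (x * b' * x⁻¹) := by group
          _ = a * (a' * (x * b * x⁻¹)) * (x * b' * x⁻¹) := by rw [this]
          _ = _ := by group
      inv_mem' := by
        rintro _ ⟨a, ha, b, hb, rfl⟩
        refine ⟨a⁻¹, H.inv_mem ha, b⁻¹, H.inv_mem hb, ?_⟩
        rw [(hc a ha b hb).eq]; group } with hK
  have memK : ∀ y, y ∈ K ↔ ∃ a ∈ H, ∃ b ∈ H, y = a * (x * b * x⁻¹) := fun y => Iff.rfl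
  have hconj : ∀ b ∈ H, ∀ b' ∈ H, Commute (x * b * x⁻¹) (x * b' * x⁻¹) := fun b hb b' hb' =>
    (Commute.conj_iff x).mpr (hH.2 b hb b' hb')
  have hKe : ElemAb p K := by
    constructor
    · rintro _ ⟨a, ha, b, hb, rfl⟩
      rw [(hc a ha b hb).mul_pow, conj_pow, hH.1 a ha, hH.1 b hb]; group
    · rintro _ ⟨a, ha, b, hb, rfl⟩ _ ⟨a', ha', b', hb', rfl⟩
      exact ((hH.2 a ha a' ha').mul_right (hc a ha b' hb')).mul_left
        ((hc a' ha' b hb).symm.mul_right (hconj b hb b' hb'))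
  have : K = H := hmax K hKe (fun a ha => (memK a).mpr ⟨a, ha, 1, H.one_mem, by group⟩)
  rw [← this, memK]
  exact ⟨1, H.one_mem, e, he, by group⟩

/-- The exceptional set: elements normalising `H` whose whole coset consists of solutions of
`y ^ 3 = 1`. -/
def excSet {G : Type*} [Group G] (H : Subgroup G) : Set G :=
  {x | x ∈ Subgroup.normalizer (H : Set G) ∧ ∀ h ∈ H, (h * x) ^ 3 = 1}

open Classical in
theorem coset_bound {G : Type*} [Group G] [Finite G] {p : ℕ} [Fact p.Prime] (hp : 5 ≤ p)
    {H : Subgroup G} [Fintype H] (hH : ElemAb p H)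
    (hmax : ∀ K : Subgroup G, ElemAb p K → H ≤ K → K = H)
    (hbot : ∃ g ∈ H, g ≠ 1) (x : G) (hx : x ∉ excSet H) :
    ∑ h : H, wt (orderOf ((h : G) * x)) ≤ kap p * Fintype.card H := by
  by_cases hc : ∀ d ∈ H, ∀ e ∈ H, Commute d (x * e * x⁻¹)
  swap
  · push Not at hc
    obtain ⟨d, hd, e, he, hnc⟩ := hc
    exact sum_coset_le' hp hH hd he x hnc
  have hN := mem_normalizer_of_commute hH hmax x hc
  have hxN : x ∈ Subgroup.normalizer (H : Set G) := by
    rw [Subgroup.mem_normalizer_iff]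
    intro h
    refine ⟨hN h, fun hh => ?_⟩
    have hinj : Function.Injective (fun k : H => (⟨x * k * x⁻¹, hN k k.2⟩ : H)) := by
      intro a b hab
      simpa using hab
    obtain ⟨k, hk⟩ := (Finite.surjective_of_injective hinj) ⟨_, hh⟩
    have : (k : G) = h := by simpa using hk
    rw [← this]; exact k.2
  have hnfull : ¬ ∀ h ∈ H, (h * x) ^ 3 = 1 := fun h => hx ⟨hxN, h⟩
  by_cases hg : ∃ g ∈ H, g ≠ 1 ∧ ∀ h ∈ H, ¬ ∀ i : ZMod p, (zp g i * (h * x)) ^ 3 = 1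
  · obtain ⟨g, hgH, hg1, hgl⟩ := hg
    exact sum_coset_le hp hgH (hH.1 g hgH) hg1 x hgl
  push Not at hg
  have hconj : ∀ h ∈ H, ∀ g ∈ H, h * x * g * (h * x)⁻¹ = x * g * x⁻¹ := by
    intro h hh g hgH
    have e1 : h * x * g * (h * x)⁻¹ = h * (x * g * x⁻¹) * h⁻¹ := by group
    rw [e1, (hH.2 h hh _ (hN g hgH)).eq]; group
  have htr : ∀ g ∈ H, g * (x * g * x⁻¹) * (x * (x * g * x⁻¹) * x⁻¹) = 1 := by
    intro g hgH
    by_cases hg1 : g = 1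
    · subst hg1; group
    obtain ⟨h, hh, hl⟩ := hg g hgH hg1
    have h0 := hl 0
    have h1 := hl 1
    rw [zp_zero, one_mul] at h0
    have hz1 : zp g (1 : ZMod p) = g := by simpa using zp_natCast (p := p) (hH.1 g hgH) 1
    rw [hz1, cube_expand _ _ h0, hconj h hh g hgH, hconj h hh _ (hN g hgH)] at h1
    exact h1
  exfalso
  obtain ⟨g, hgH, hg1⟩ := hbot
  obtain ⟨h, hh, hl⟩ := hg g hgH hg1
  have h0 := hl 0
  rw [zp_zero, one_mul] at h0
  apply hnfull
  intro k hk
  have e1 : k * x = (k * h⁻¹) * (h * x) := by group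
  have hm : k * h⁻¹ ∈ H := H.mul_mem hk (H.inv_mem hh)
  rw [e1, cube_expand _ _ h0, hconj h hh _ hm, hconj h hh _ (hN _ hm)]
  exact htr _ hm

open Classical in
theorem sum_bound {G : Type*} [Group G] [Fintype G] {p : ℕ} [Fact p.Prime] (hp : 5 ≤ p)
    {H : Subgroup G} (hH : ElemAb p H)
    (hmax : ∀ K : Subgroup G, ElemAb p K → H ≤ K → K = H)
    (hbot : ∃ g ∈ H, g ≠ 1) :
    ∑ x : G, wt (orderOf x) ≤ kap p * Fintype.card G +
      (1 - kap p) * (Finset.univ.filter (fun x : G => x ∈ excSet H)).card := by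
  have hpos : (0 : ℚ) < Fintype.card H := by exact_mod_cast Fintype.card_pos
  have h1 : ∑ h : H, ∑ x : G, wt (orderOf ((h : G) * x)) =
      Fintype.card H * ∑ x : G, wt (orderOf x) := by
    have : ∀ h : H, ∑ x : G, wt (orderOf ((h : G) * x)) = ∑ x : G, wt (orderOf x) :=
      fun h => Equiv.sum_comp (Equiv.mulLeft (h : G)) (fun x => wt (orderOf x))
    simp only [this]
    rw [Finset.sum_const, Finset.card_univ, nsmul_eq_mul]
  rw [Finset.sum_comm] at h1
  have h2 : ∑ x : G, ∑ h : H, wt (orderOf ((h : G) * x)) ≤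
      ∑ x : G, (Fintype.card H : ℚ) * (kap p + (1 - kap p) * if x ∈ excSet H then 1 else 0) := by
    refine Finset.sum_le_sum (fun x _ => ?_)
    by_cases hx : x ∈ excSet H
    · rw [if_pos hx]
      have : ∑ h : H, wt (orderOf ((h : G) * x)) ≤ ∑ _h : H, (1 : ℚ) := by
        refine Finset.sum_le_sum (fun h _ => ?_)
        have hc := hx.2 h h.2
        have hne : (h : G) * x ≠ 1 := by
          intro he
          obtain ⟨g, hg, hg1⟩ := hbot
          have h3 := hx.2 (g * h) (H.mul_mem hg h.2)
          rw [mul_assoc, he, mul_one] at h3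
          have hgp := hH.1 g hg
          have hcop : Nat.Coprime 3 p := by
            rw [Nat.coprime_primes Nat.prime_three (Fact.out)]; omega
          have := Nat.dvd_gcd (orderOf_dvd_of_pow_eq_one h3) (orderOf_dvd_of_pow_eq_one hgp)
          rw [hcop] at this
          exact hg1 (orderOf_eq_one_iff.mp (Nat.dvd_one.mp this))
        have := wt_le _ hne
        rwa [if_pos hc] at this
      rw [Finset.sum_const, Finset.card_univ, nsmul_eq_mul] at this
      linarith
    · rw [if_neg hx]
      have := coset_bound hp hH hmax hbot x hx
      linarith
  rw [h1, ← Finset.mul_sum] at h2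
  have h3 := le_of_mul_le_mul_left h2 hpos
  rw [Finset.sum_add_distrib, ← Finset.mul_sum, Finset.sum_boole, Finset.sum_const,
    Finset.card_univ, nsmul_eq_mul] at h3
  linarith

theorem eq_one_of_cube {G : Type*} [Group G] {p : ℕ} [Fact p.Prime] (hp : 5 ≤ p) {g : G}
    (h3 : g ^ 3 = 1) (hgp : g ^ p = 1) : g = 1 := by
  have hcop : Nat.Coprime 3 p := by
    rw [Nat.coprime_primes Nat.prime_three (Fact.out)]; omega
  have := Nat.dvd_gcd (orderOf_dvd_of_pow_eq_one h3) (orderOf_dvd_of_pow_eq_one hgp)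
  rw [hcop] at this
  exact (orderOf_eq_one_iff.mp (Nat.dvd_one.mp this))

theorem exc_no_triple {G : Type*} [Group G] {p : ℕ} [Fact p.Prime] (hp : 5 ≤ p)
    {H : Subgroup G} (hH : ElemAb p H) (hbot : ∃ g ∈ H, g ≠ 1) {x y : G}
    (hy : y ∈ excSet H) (h0 : x ∈ excSet H) (h1 : y * x ∈ excSet H)
    (h2 : y⁻¹ * x ∈ excSet H) : False := by
  have hyN := hy.1
  have hxN := h0.1
  have hy3 : y ^ 3 = 1 := by simpa using hy.2 1 H.one_mem
  have fixed : ∀ c ∈ H, Commute y c → c = 1 := by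
    intro c hc hcomm
    have h := hy.2 c hc
    rw [hcomm.symm.mul_pow, hy3, mul_one] at h
    exact eq_one_of_cube hp h (hH.1 c hc)
  have key : ∀ h ∈ H, Commute y ((h * x) * y * (h * x)⁻¹) := by
    intro h hh
    refine cube_pm _ _ (h0.2 h hh) ?_ ?_
    · have := h1.2 (y * h * y⁻¹) ((Subgroup.mem_normalizer_iff.mp hyN h).mp hh)
      rwa [show y * h * y⁻¹ * (y * x) = y * (h * x) by group] at this
    · have := h2.2 (y⁻¹ * h * y⁻¹⁻¹)
        ((Subgroup.mem_normalizer_iff.mp (Subgroup.inv_mem _ hyN) h).mp hh)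
      rwa [show y⁻¹ * h * y⁻¹⁻¹ * (y⁻¹ * x) = y⁻¹ * (h * x) by group] at this
  have hy1N : x * y * x⁻¹ ∈ Subgroup.normalizer (H : Set G) :=
    Subgroup.mul_mem _ (Subgroup.mul_mem _ hxN hyN) (Subgroup.inv_mem _ hxN)
  obtain ⟨g, hg, hg1⟩ := hbot
  have hh : x * g * x⁻¹ ∈ H := (Subgroup.mem_normalizer_iff.mp hxN g).mp hg
  set h := x * g * x⁻¹ with hhdef
  have k1 := key h hh
  have k0 := key 1 H.one_mem
  have k2 := k1.mul_right k0.inv_right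
  have e1 : h * x * y * (h * x)⁻¹ * (1 * x * y * (1 * x)⁻¹)⁻¹ =
      h * ((x * y * x⁻¹) * h⁻¹ * (x * y * x⁻¹)⁻¹) := by group
  rw [e1] at k2
  have k3 := fixed _ (H.mul_mem hh ((Subgroup.mem_normalizer_iff.mp hy1N _).mp (H.inv_mem hh))) k2
  apply hg1
  apply fixed g hg
  have e2 : h * ((x * y * x⁻¹) * h⁻¹ * (x * y * x⁻¹)⁻¹) =
      x * (g * y * g⁻¹ * y⁻¹) * x⁻¹ := by rw [hhdef]; group
  rw [e2, conj_eq_one_iff] at k3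
  have : g * y = y * g := by
    calc g * y = (g * y * g⁻¹ * y⁻¹) * (y * g) := by group
      _ = y * g := by rw [k3, one_mul]
  exact this.symm

open Classical in
theorem exc_card {G : Type*} [Group G] [Fintype G] {p : ℕ} [Fact p.Prime] (hp : 5 ≤ p)
    {H : Subgroup G} (hH : ElemAb p H) (hbot : ∃ g ∈ H, g ≠ 1) :
    3 * (Finset.univ.filter (fun x : G => x ∈ excSet H)).card ≤
      2 * Nat.card (Subgroup.normalizer (H : Set G)) := by
  set A := Finset.univ.filter (fun x : G => x ∈ excSet H) with hA
  set N := Finset.univ.filter (fun x : G => x ∈ Subgroup.normalizer (H : Set G)) with hN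
  have hNc : Nat.card (Subgroup.normalizer (H : Set G)) = N.card := by
    rw [Nat.card_eq_fintype_card, Fintype.card_subtype]
  rw [hNc]
  have hAN : A ⊆ N := by
    intro x hx
    simp only [hA, hN, Finset.mem_filter, Finset.mem_univ, true_and] at hx ⊢
    exact hx.1
  rcases A.eq_empty_or_nonempty with h | ⟨y, hy⟩
  · simp [h]
  have hyN := hAN hy
  simp only [hA, hN, Finset.mem_filter, Finset.mem_univ, true_and] at hy hyN
  have tr : ∀ z ∈ Subgroup.normalizer (H : Set G),
      A.image (fun a => z⁻¹ * a) ⊆ N ∧ (A.image (fun a => z⁻¹ * a)).card = A.card := by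
    intro z hz
    refine ⟨?_, Finset.card_image_of_injective _ (mul_right_injective _)⟩
    intro w hw
    obtain ⟨a, ha, rfl⟩ := Finset.mem_image.mp hw
    have := hAN ha
    simp only [hN, Finset.mem_filter, Finset.mem_univ, true_and] at this ⊢
    exact Subgroup.mul_mem _ (Subgroup.inv_mem _ hz) this
  obtain ⟨s1, c1⟩ := tr y hyN
  obtain ⟨s2, c2⟩ := tr y⁻¹ (Subgroup.inv_mem _ hyN)
  set B := A.image (fun a => y⁻¹ * a) with hB
  set C := A.image (fun a => y⁻¹⁻¹ * a) with hC
  have cover : N ⊆ (N \ A) ∪ ((N \ B) ∪ (N \ C)) := by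
    intro x hx
    by_contra hcon
    simp only [Finset.mem_union, Finset.mem_sdiff, hx, true_and, not_or, not_not] at hcon
    obtain ⟨x0, x1, x2⟩ := hcon
    obtain ⟨a, ha, rfl⟩ := Finset.mem_image.mp x1
    obtain ⟨b, hb, hb2⟩ := Finset.mem_image.mp x2
    simp only [hA, Finset.mem_filter, Finset.mem_univ, true_and] at x0 ha hb
    refine exc_no_triple hp hH hbot hy x0 (by simpa using ha) ?_
    rw [← hb2]
    simpa using hb
  have u1 := (Finset.card_le_card cover).trans (Finset.card_union_le _ _)
  have u2 := Finset.card_union_le (N \ B) (N \ C)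
  have v0 := Finset.card_sdiff_add_card_eq_card hAN
  have v1 := Finset.card_sdiff_add_card_eq_card s1
  have v2 := Finset.card_sdiff_add_card_eq_card s2
  omega

theorem exists_normal_pgroup {G : Type*} [Group G] [Finite G] {p : ℕ} [Fact p.Prime]
    (K : Subgroup G) [K.Normal] (M : Subgroup K) [hM : M.Normal] (hMp : IsPGroup p M)
    (hne : M ≠ ⊥) : ∃ R : Subgroup G, R.Normal ∧ IsPGroup p R ∧ R ≠ ⊥ := by
  set S : Set (Subgroup K) := {L | L.Normal ∧ IsPGroup p L} with hS
  have hp : IsPGroup p (sSup S : Subgroup K) :=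
    Sylow.sSup_of_normal S (fun L hL => hL.2) (fun L hL => hL.1)
  have hch : (sSup S).Characteristic := by
    rw [Subgroup.characteristic_iff_map_le]
    intro φ
    rw [Subgroup.map_le_iff_le_comap]
    refine sSup_le (fun L hL => ?_)
    rw [← Subgroup.map_le_iff_le_comap]
    refine le_sSup ⟨?_, hL.2.map _⟩
    exact hL.1.map _ φ.surjective
  refine ⟨(sSup S).map K.subtype, inferInstance, hp.map _, ?_⟩
  rw [Ne, Subgroup.map_eq_bot_iff_of_injective _ K.subtype_injective]
  intro h
  exact hne (le_bot_iff.mp (h ▸ le_sSup (show M ∈ S from ⟨hM, hMp⟩)))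

theorem index_normalizer {G : Type*} [Group G] [Finite G] {p : ℕ} [Fact p.Prime]
    (hno : ∀ R : Subgroup G, R.Normal → IsPGroup p R → R = ⊥)
    {H : Subgroup G} (hH : IsPGroup p H) (hne : H ≠ ⊥) :
    p + 1 ≤ (Subgroup.normalizer (H : Set G)).index := by
  by_contra hlt
  set N := Subgroup.normalizer (H : Set G) with hN
  have hmod := hH.card_modEq_card_fixedPoints (G ⧸ N)
  have hcard : Nat.card (G ⧸ N) = N.index := rfl
  have hfixle : Nat.card (MulAction.fixedPoints H (G ⧸ N)) ≤ Nat.card (G ⧸ N) :=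
    Nat.card_le_card_of_injective _ Subtype.val_injective
  have hHN : H ≤ N := Subgroup.le_normalizer
  have h1 : ((1 : G) : G ⧸ N) ∈ MulAction.fixedPoints H (G ⧸ N) := by
    intro h
    change (((h : G) * 1 : G) : G ⧸ N) = ((1 : G) : G ⧸ N)
    rw [QuotientGroup.eq]
    simpa using hHN h.2
  have hfixpos : 0 < Nat.card (MulAction.fixedPoints H (G ⧸ N)) :=
    Nat.card_pos_iff.mpr ⟨⟨⟨_, h1⟩⟩, inferInstance⟩
  have heq : Nat.card (MulAction.fixedPoints H (G ⧸ N)) = Nat.card (G ⧸ N) := by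
    have hd := (Nat.modEq_iff_dvd' hfixle).mp hmod.symm
    have : Nat.card (G ⧸ N) - Nat.card (MulAction.fixedPoints H (G ⧸ N)) = 0 :=
      Nat.eq_zero_of_dvd_of_lt hd (by omega)
    omega
  have hall : ∀ a : G ⧸ N, a ∈ MulAction.fixedPoints H (G ⧸ N) := by
    have : (MulAction.fixedPoints H (G ⧸ N)) = Set.univ := by
      rw [Set.eq_univ_iff_ncard]; exact heq
    intro a; rw [this]; trivial
  have hHK : H ≤ N.normalCore := by
    intro h hh g
    have := hall ((g⁻¹ : G) : G ⧸ N) ⟨h⁻¹, H.inv_mem hh⟩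
    change (((h⁻¹ : G) * g⁻¹ : G) : G ⧸ N) = ((g⁻¹ : G) : G ⧸ N) at this
    rw [QuotientGroup.eq] at this
    have e : (h⁻¹ * g⁻¹)⁻¹ * g⁻¹ = g * h * g⁻¹ := by group
    rwa [e] at this
  have hnor : (H.subgroupOf N.normalCore).Normal := by
    refine ⟨fun n hn g => ?_⟩
    rw [Subgroup.mem_subgroupOf] at hn ⊢
    have hg : (g : G) ∈ N := N.normalCore_le g.2
    exact (Subgroup.mem_normalizer_iff.mp hg n).mp hn
  obtain ⟨R, hR, hRp, hRne⟩ := exists_normal_pgroup N.normalCore (H.subgroupOf N.normalCore)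
    (hH.comap_subtype) (by
      rw [Ne, Subgroup.subgroupOf_eq_bot]
      intro hd
      exact hne (by simpa [inf_eq_left.mpr hHK] using hd.eq_bot))
  exact hRne (hno R hR hRp)

theorem exists_max_elemAb {G : Type*} [Group G] [Finite G] {p : ℕ} [Fact p.Prime]
    (hd : p ∣ Nat.card G) : ∃ H : Subgroup G, ElemAb p H ∧
      (∀ K : Subgroup G, ElemAb p K → H ≤ K → K = H) ∧ ∃ g ∈ H, g ≠ 1 := by
  obtain ⟨g, hg⟩ := exists_prime_orderOf_dvd_card' p hd
  have h0 : ElemAb p (Subgroup.zpowers g) := by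
    constructor
    · rintro _ ⟨k, rfl⟩
      change (g ^ k) ^ p = 1
      rw [← zpow_natCast, ← zpow_mul, mul_comm, zpow_mul, zpow_natCast, ← hg,
        pow_orderOf_eq_one, one_zpow]
    · rintro _ ⟨k, rfl⟩ _ ⟨l, rfl⟩
      exact (Commute.refl g).zpow_zpow k l
  obtain ⟨H, hle, hmax⟩ := Set.Finite.exists_le_maximal
    (Set.toFinite {K : Subgroup G | ElemAb p K}) h0
  refine ⟨H, hmax.1, fun K hK hHK => le_antisymm (hmax.2 hK hHK) hHK, g,
    hle (Subgroup.mem_zpowers g), ?_⟩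
  rintro rfl
  rw [orderOf_one] at hg
  exact (Fact.out : p.Prime).ne_one hg.symm

theorem weight_bound {G : Type*} [Group G] [Fintype G] {p : ℕ} [Fact p.Prime] (hp : 5 ≤ p)
    (hd : p ∣ Nat.card G) (hno : ∀ R : Subgroup G, R.Normal → IsPGroup p R → R = ⊥) :
    ∑ x : G, wt (orderOf x) ≤ 7 / 20 * Fintype.card G := by
  classical
  obtain ⟨H, hH, hmax, hbot⟩ := exists_max_elemAb hd
  have hHp : IsPGroup p H := fun h => ⟨1, by
    rw [pow_one]; exact Subtype.ext (hH.1 h h.2)⟩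
  have hne : H ≠ ⊥ := by
    rintro rfl
    obtain ⟨g, hg, hg1⟩ := hbot
    exact hg1 (Subgroup.mem_bot.mp hg)
  have hs := sum_bound hp hH hmax hbot
  have hc := exc_card hp hH hbot
  have hi := index_normalizer hno hHp hne
  have hm := (Subgroup.normalizer (H : Set G)).card_mul_index
  rw [Nat.card_eq_fintype_card (α := G)] at hm
  set A := (Finset.univ.filter (fun x : G => x ∈ excSet H)).card
  set N := Nat.card (Subgroup.normalizer (H : Set G))
  set I := (Subgroup.normalizer (H : Set G)).index
  set n := Fintype.card G
  have hA : 3 * (A : ℚ) ≤ 2 * N := by exact_mod_cast hc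
  have hN : (N : ℚ) * (p + 1) ≤ n := by
    rw [← hm]
    have : N * (p + 1) ≤ N * I := Nat.mul_le_mul_left _ hi
    exact_mod_cast this
  have hn0 : (0 : ℚ) ≤ N := by positivity
  have hpp : p.Prime := Fact.out
  by_cases h5 : p = 5
  · subst h5
    norm_num [kap] at hs hN
    linarith
  by_cases h7 : p = 7
  · subst h7
    norm_num [kap] at hs hN
    linarith
  have h11 : 11 ≤ p := by
    by_contra hlt
    have : p = 6 ∨ p = 8 ∨ p = 9 ∨ p = 10 := by omega
    rcases this with rfl | rfl | rfl | rfl <;> revert hpp <;> norm_num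
  have h11' : (11 : ℚ) ≤ p := by exact_mod_cast h11
  have : (N : ℚ) * 12 ≤ n := by nlinarith
  rw [kap, if_neg h5, if_neg h7] at hs
  linarith

/-! ### The theorem of Burnside for `{2,3}`-groups -/

theorem norm_multiset_sum_le' {n : ℕ} (hn : n ≠ 0) (s : Multiset ℂ) (hs : ∀ a ∈ s, a ^ n = 1) :
    ‖s.sum‖ ≤ s.card := by
  induction s using Multiset.induction_on with
  | empty => simp
  | cons a s ih =>
    rw [Multiset.sum_cons, Multiset.card_cons]
    have h1 : ‖a‖ = 1 := Complex.norm_eq_one_of_pow_eq_one (hs a (Multiset.mem_cons_self a s)) hn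
    have h2 := ih (fun b hb => hs b (Multiset.mem_cons_of_mem hb))
    have h3 := norm_add_le a s.sum
    push_cast
    linarith

theorem re_sum_eq {n : ℕ} (hn : n ≠ 0) (u : ℂ) (hu : ‖u‖ = 1) (s : Multiset ℂ)
    (hs : ∀ a ∈ s, a ^ n = 1) :
    (u * s.sum).re ≤ s.card ∧ ((s.card : ℝ) ≤ (u * s.sum).re → ∀ a ∈ s, u * a = 1) := by
  induction s using Multiset.induction_on with
  | empty => simp
  | cons a s ih =>
    rw [Multiset.sum_cons, Multiset.card_cons, mul_add, Complex.add_re]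
    have h1 : ‖a‖ = 1 := Complex.norm_eq_one_of_pow_eq_one (hs a (Multiset.mem_cons_self a s)) hn
    have hua : ‖u * a‖ = 1 := by rw [norm_mul, hu, h1, one_mul]
    have h4 : (u * a).re ≤ 1 := hua ▸ Complex.re_le_norm _
    obtain ⟨h2, h3⟩ := ih (fun b hb => hs b (Multiset.mem_cons_of_mem hb))
    push_cast
    refine ⟨by linarith, fun hle b hb => ?_⟩
    rcases Multiset.mem_cons.mp hb with rfl | hb
    · have hre : (u * b).re = 1 := by linarith
      have hsq : (u * b).re * (u * b).re + (u * b).im * (u * b).im = 1 := by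
        rw [← Complex.normSq_apply, Complex.normSq_eq_norm_sq, hua]; norm_num
      have him : (u * b).im = 0 := by
        rw [hre] at hsq
        exact mul_self_eq_zero.mp (by linarith)
      exact Complex.ext hre him
    · exact h3 (by linarith) b hb

theorem roots_lemma_aux {n : ℕ} [NeZero n] (hn : n ≠ 0) (K : Type) [Field K] [NumberField K]
    (ι : K →+* ℂ) (ζ : K) (hζ : IsPrimitiveRoot ζ n) (s : Multiset ℂ) (hs : ∀ a ∈ s, a ^ n = 1)
    (hs0 : s.card ≠ 0) (hintegral : IsIntegral ℤ (s.sum / s.card)) :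
    s.sum = 0 ∨ ∃ c, ∀ a ∈ s, a = c := by
  have hζ' : IsPrimitiveRoot (ι ζ) n :=
    hζ.map_of_injective ι.injective
  have hex : ∀ a : ℂ, ∃ b : K, a ^ n = 1 → (ι b = a ∧ b ^ n = 1) := by
    intro a
    by_cases ha : a ^ n = 1
    · obtain ⟨i, -, hi⟩ := hζ'.eq_pow_of_pow_eq_one ha
      refine ⟨ζ ^ i, fun _ => ⟨by rw [map_pow, hi], ?_⟩⟩
      rw [← pow_mul, mul_comm, pow_mul, hζ.pow_eq_one, one_pow]
    · exact ⟨0, fun h => absurd h ha⟩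
  choose f hf using hex
  set t : Multiset K := s.map f with ht
  have hts : t.map ι = s := by
    rw [ht, Multiset.map_map]
    conv_rhs => rw [← Multiset.map_id s]
    exact Multiset.map_congr rfl (fun a ha => (hf a (hs a ha)).1)
  have htn : ∀ b ∈ t, b ^ n = 1 := by
    intro b hb
    obtain ⟨a, ha, rfl⟩ := Multiset.mem_map.mp hb
    exact (hf a (hs a ha)).2
  have htc : t.card = s.card := by rw [ht, Multiset.card_map]
  have hsum : ι t.sum = s.sum := by rw [map_multiset_sum, hts]
  set β : K := t.sum / t.card with hβ
  have hιβ : ι β = s.sum / s.card := by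
    rw [hβ, map_div₀, hsum, map_natCast, htc]
  have hc0 : (s.card : ℂ) ≠ 0 := by exact_mod_cast hs0
  by_cases h0 : β = 0
  · left
    rw [h0, map_zero] at hιβ
    rcases div_eq_zero_iff.mp hιβ.symm with h | h
    · exact h
    · exact absurd h hc0
  right
  have hβi : IsIntegral ℤ β := by
    rw [← isIntegral_algHom_iff ι.toIntAlgHom ι.injective]
    change IsIntegral ℤ (ι β)
    rwa [hιβ]
  have hnorm : ∀ φ : K →+* ℂ, ‖φ β‖ ≤ 1 := by
    intro φ
    rw [hβ, map_div₀, map_multiset_sum, map_natCast, norm_div]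
    have := norm_multiset_sum_le' hn (t.map φ) (by
      intro a ha
      obtain ⟨b, hb, rfl⟩ := Multiset.mem_map.mp ha
      rw [← map_pow, htn b hb, map_one])
    rw [Multiset.card_map] at this
    rw [Complex.norm_natCast]
    exact div_le_one_of_le₀ this (by positivity)
  obtain ⟨m, hm, hpow⟩ := NumberField.Embeddings.pow_eq_one_of_norm_le_one K ℂ h0 hβi hnorm
  have h1 : ‖ι β‖ = 1 := Complex.norm_eq_one_of_pow_eq_one (n := m)
    (by rw [← map_pow, hpow, map_one]) hm.ne'
  have hne : ι β ≠ 0 := by intro h; rw [h] at h1; simp at h1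
  have hss : s.sum = s.card * ι β := by rw [hιβ]; field_simp
  refine ⟨ι β, fun a ha => ?_⟩
  have hu : ‖(ι β)⁻¹‖ = 1 := by rw [norm_inv, h1, inv_one]
  have := (re_sum_eq hn (ι β)⁻¹ hu s hs).2 (by
    rw [hss, mul_comm (s.card : ℂ), ← mul_assoc, inv_mul_cancel₀ hne, one_mul]
    simp) a ha
  field_simp at this
  exact this

theorem roots_lemma {n : ℕ} (hn : n ≠ 0) (s : Multiset ℂ) (hs : ∀ a ∈ s, a ^ n = 1)
    (hs0 : s.card ≠ 0) (hintegral : IsIntegral ℤ (s.sum / s.card)) :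
    s.sum = 0 ∨ ∃ c, ∀ a ∈ s, a = c := by
  have : NeZero n := ⟨hn⟩
  have ι : CyclotomicField n ℚ →+* ℂ := Classical.arbitrary _
  have hz : ∃ ζ : CyclotomicField n ℚ, IsPrimitiveRoot ζ n :=
    ⟨_, @IsCyclotomicExtension.zeta_spec n _ ℚ (CyclotomicField n ℚ) _ _
      (CyclotomicField.algebra n ℚ) (CyclotomicField.isCyclotomicExtension n ℚ)⟩
  obtain ⟨ζ, hζ⟩ := hz
  exact roots_lemma_aux hn (CyclotomicField n ℚ) ι ζ hζ s hs hs0 hintegral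

theorem matrix_root {d n : ℕ} [NeZero d] {M : Matrix (Fin d) (Fin d) ℂ} (hM : M ^ n = 1) :
    ∀ a ∈ M.charpoly.roots, a ^ n = 1 := by
  intro a ha
  have h1 : a ∈ spectrum ℂ M :=
    Matrix.mem_spectrum_iff_isRoot_charpoly.mpr (Polynomial.isRoot_of_mem_roots ha)
  have h2 := spectrum.pow_mem_pow M n h1
  rw [hM, spectrum.one_eq] at h2
  exact h2

theorem matrix_integral {d n : ℕ} [NeZero d] (hn : n ≠ 0) {M : Matrix (Fin d) (Fin d) ℂ}
    (hM : M ^ n = 1) : IsIntegral ℤ M.trace := by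
  rw [Matrix.trace_eq_sum_roots_charpoly]
  refine IsIntegral.multiset_sum (fun a ha => ?_)
  refine IsIntegral.of_pow (Nat.pos_of_ne_zero hn) ?_
  rw [matrix_root hM a ha]
  exact isIntegral_one

theorem matrix_lemma {d n : ℕ} [NeZero d] (hn : n ≠ 0) {M : Matrix (Fin d) (Fin d) ℂ}
    (hM : M ^ n = 1) (hintegral : IsIntegral ℤ (M.trace / d)) :
    M.trace = 0 ∨ ∃ c : ℂ, M = Matrix.scalar (Fin d) c := by
  have hcard : M.charpoly.roots.card = d := by
    rw [Polynomial.splits_iff_card_roots.mp (IsAlgClosed.splits _),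
      Matrix.charpoly_natDegree_eq_dim, Fintype.card_fin]
  have htr := Matrix.trace_eq_sum_roots_charpoly M
  rw [htr] at hintegral ⊢
  rcases roots_lemma hn M.charpoly.roots (matrix_root hM) (by rw [hcard]; exact NeZero.ne d)
    (by rwa [hcard]) with h | ⟨c, hc⟩
  · exact Or.inl h
  right
  refine ⟨c, ?_⟩
  have hcp : M.charpoly = (Polynomial.X - Polynomial.C c) ^ d := by
    have h1 := (IsAlgClosed.splits M.charpoly).eq_prod_roots
    rw [(Matrix.charpoly_monic M).leadingCoeff, Polynomial.C_1, one_mul,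
      Multiset.eq_replicate.mpr ⟨hcard, hc⟩, Multiset.map_replicate, Multiset.prod_replicate] at h1
    exact h1
  have hd1 : minpoly ℂ M ∣ (Polynomial.X - Polynomial.C c) ^ d := by
    rw [← hcp]; exact minpoly.dvd _ _ (Matrix.aeval_self_charpoly M)
  have hd2 : minpoly ℂ M ∣ Polynomial.X ^ n - 1 := by
    apply minpoly.dvd
    simp [hM]
  have hsq : Squarefree (minpoly ℂ M) := by
    refine Squarefree.squarefree_of_dvd hd2 (Polynomial.Separable.squarefree ?_)
    rw [Polynomial.X_pow_sub_one_separable_iff]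
    exact_mod_cast hn
  have hd3 := (hsq.dvd_pow_iff_dvd (NeZero.ne d)).mp hd1
  have h4 := (minpoly.dvd_iff).mp hd3
  rw [map_sub, Polynomial.aeval_X, Polynomial.aeval_C, sub_eq_zero] at h4
  rw [h4]; rfl

theorem trace_pi_mulLeft {k : ℕ} {d : Fin k → ℕ} (a : Π i, Matrix (Fin (d i)) (Fin (d i)) ℂ) :
    LinearMap.trace ℂ _ (LinearMap.mulLeft ℂ a) = ∑ i, (d i : ℂ) * (a i).trace := by
  rw [LinearMap.trace_eq_matrix_trace ℂ
    (Pi.basis (fun i => Matrix.stdBasis ℂ (Fin (d i)) (Fin (d i)))), Matrix.trace,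
    Fintype.sum_sigma]
  refine Finset.sum_congr rfl (fun i _ => ?_)
  rw [Fintype.sum_prod_type]
  simp only [Matrix.diag_apply, LinearMap.toMatrix_apply, Pi.basis_apply, Pi.basis_repr,
    LinearMap.mulLeft_apply, Matrix.stdBasis_eq_single, Pi.mul_apply, Pi.single_eq_same]
  have : ∀ (M : Matrix (Fin (d i)) (Fin (d i)) ℂ) (x y),
      ((Matrix.stdBasis ℂ (Fin (d i)) (Fin (d i))).repr M) (x, y) = M x y := by
    intro M x y
    rfl
  simp only [this, Matrix.mul_single_apply_same]
  simp [Matrix.trace, Finset.mul_sum]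

theorem trace_reg {G : Type*} [Group G] [Fintype G] {g : G} (hg : g ≠ 1) :
    LinearMap.trace ℂ _ (LinearMap.mulLeft ℂ (MonoidAlgebra.of ℂ G g)) = 0 := by
  classical
  rw [LinearMap.trace_eq_matrix_trace ℂ (MonoidAlgebra.basis G ℂ), Matrix.trace]
  refine Finset.sum_eq_zero (fun x _ => ?_)
  rw [Matrix.diag_apply, LinearMap.toMatrix_apply, LinearMap.mulLeft_apply,
    MonoidAlgebra.basis_apply, MonoidAlgebra.of_apply, MonoidAlgebra.single_mul_single]
  change (MonoidAlgebra.single (g * x) ((1 : ℂ) * 1)).coeff x = 0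
  rw [MonoidAlgebra.coeff_single, Finsupp.single_apply, if_neg]
  intro h
  exact hg (by simpa using h)

section WedderburnData

variable {G : Type*} [Group G] [Fintype G] {k : ℕ} {d : Fin k → ℕ}
  (e : MonoidAlgebra ℂ G ≃ₐ[ℂ] Π i, Matrix (Fin (d i)) (Fin (d i)) ℂ)

/-- The `i`-th irreducible representation. -/
noncomputable def irr (i : Fin k) : G →* Matrix (Fin (d i)) (Fin (d i)) ℂ where
  toFun x := e (MonoidAlgebra.of ℂ G x) i
  map_one' := by rw [map_one, map_one, Pi.one_apply]
  map_mul' x y := by rw [map_mul, map_mul, Pi.mul_apply]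

theorem irr_apply (i : Fin k) (x : G) : irr e i x = e (MonoidAlgebra.of ℂ G x) i := rfl

theorem irr_ind (i : Fin k) (P : Matrix (Fin (d i)) (Fin (d i)) ℂ → Prop)
    (h1 : ∀ x, P (irr e i x)) (h2 : ∀ M N, P M → P N → P (M + N))
    (h3 : ∀ (c : ℂ) M, P M → P (c • M)) (M : Matrix (Fin (d i)) (Fin (d i)) ℂ) : P M := by
  have key : ∀ a : MonoidAlgebra ℂ G, P (e a i) := by
    intro a
    induction a using MonoidAlgebra.induction_on with
    | of x => exact h1 x
    | add x y hx hy => rw [map_add, Pi.add_apply]; exact h2 _ _ hx hy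
    | smul c x hx => rw [map_smul, Pi.smul_apply]; exact h3 _ _ hx
  have := key (e.symm (Pi.single i M))
  rwa [AlgEquiv.apply_symm_apply, Pi.single_eq_same] at this

theorem irr_schur (i : Fin k) (M : Matrix (Fin (d i)) (Fin (d i)) ℂ)
    (h : ∀ x, Commute (irr e i x) M) : ∃ c : ℂ, M = Matrix.scalar (Fin (d i)) c := by
  have hall : ∀ N, Commute N M := irr_ind e i (fun N => Commute N M) h
    (fun _ _ h1 h2 => h1.add_left h2) (fun c _ h1 => h1.smul_left c)
  obtain ⟨c, hc⟩ := Matrix.mem_range_scalar_of_commute_single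
    (M := M) (fun a b _ => hall (Matrix.single a b 1))
  exact ⟨c, hc.symm⟩

theorem irr_trivial_unique (hd : ∀ i, NeZero (d i)) {i j : Fin k} (hi : ∀ x, irr e i x = 1)
    (hj : ∀ x, irr e j x = 1) : i = j := by
  by_contra hij
  have key : ∀ a : MonoidAlgebra ℂ G, ∃ c : ℂ, e a i = c • 1 ∧ e a j = c • 1 := by
    intro a
    induction a using MonoidAlgebra.induction_on with
    | of x => exact ⟨1, by rw [← irr_apply, hi, one_smul], by rw [← irr_apply, hj, one_smul]⟩
    | add x y hx hy =>
      obtain ⟨c, h1, h2⟩ := hx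
      obtain ⟨c', h1', h2'⟩ := hy
      exact ⟨c + c', by rw [map_add, Pi.add_apply, h1, h1', add_smul],
        by rw [map_add, Pi.add_apply, h2, h2', add_smul]⟩
    | smul r x hx =>
      obtain ⟨c, h1, h2⟩ := hx
      exact ⟨r * c, by rw [map_smul, Pi.smul_apply, h1, mul_smul],
        by rw [map_smul, Pi.smul_apply, h2, mul_smul]⟩
  obtain ⟨c, h1, h2⟩ := key (e.symm (Pi.single i 1))
  rw [AlgEquiv.apply_symm_apply] at h1 h2
  rw [Pi.single_eq_same] at h1
  rw [Pi.single_eq_of_ne (Ne.symm hij)] at h2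
  have := hd i
  have := hd j
  have e2 := congrFun (congrFun h2 0) 0
  have e1 := congrFun (congrFun h1 0) 0
  simp at e1 e2
  rw [← e2] at e1
  exact one_ne_zero e1

theorem irr_trivial_dim (hd : ∀ i, NeZero (d i)) {i : Fin k} (hi : ∀ x, irr e i x = 1) :
    d i = 1 := by
  have hall : ∀ M : Matrix (Fin (d i)) (Fin (d i)) ℂ, ∃ c : ℂ, M = c • 1 := by
    refine irr_ind e i _ (fun x => ⟨1, by rw [hi, one_smul]⟩) ?_ ?_
    · rintro _ _ ⟨c, rfl⟩ ⟨c', rfl⟩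
      exact ⟨c + c', by rw [add_smul]⟩
    · rintro r _ ⟨c, rfl⟩
      exact ⟨r * c, by rw [mul_smul]⟩
  have h0 := (hd i).out
  by_contra h1
  let a : Fin (d i) := ⟨0, by omega⟩
  let b : Fin (d i) := ⟨1, by omega⟩
  have hab : a ≠ b := by intro h; simp [a, b, Fin.ext_iff] at h
  obtain ⟨c, hc⟩ := hall (Matrix.single a b 1)
  have := congrFun (congrFun hc a) b
  simp [hab] at this

theorem irr_trivial_exists : ∃ i, ∀ x, irr e i x = 1 := by
  set s : MonoidAlgebra ℂ G := ∑ x : G, MonoidAlgebra.of ℂ G x with hs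
  have hs0 : s ≠ 0 := by
    intro h
    have := congrArg (MonoidAlgebra.lift ℂ ℂ G 1) h
    rw [hs, map_sum, map_zero] at this
    simp at this
  have hes : e s ≠ 0 := by
    intro h
    exact hs0 (e.injective (by rw [h, map_zero]))
  obtain ⟨i, hi⟩ := Function.ne_iff.mp hes
  have hS : e s i = ∑ x : G, irr e i x := by
    rw [hs, map_sum, Finset.sum_apply]; rfl
  rw [hS, Pi.zero_apply] at hi
  have hl : ∀ y, irr e i y * ∑ x : G, irr e i x = ∑ x : G, irr e i x := by
    intro y
    rw [Finset.mul_sum]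
    simp only [← map_mul]
    exact Equiv.sum_comp (Equiv.mulLeft y) (fun x => irr e i x)
  have hr : ∀ y, (∑ x : G, irr e i x) * irr e i y = ∑ x : G, irr e i x := by
    intro y
    rw [Finset.sum_mul]
    simp only [← map_mul]
    exact Equiv.sum_comp (Equiv.mulRight y) (fun x => irr e i x)
  obtain ⟨c, hc⟩ := irr_schur e i _ (fun y => (hl y).trans (hr y).symm)
  refine ⟨i, fun y => ?_⟩
  have hy := hl y
  rw [hc] at hy hi
  have hc0 : c ≠ 0 := by rintro rfl; exact hi (map_zero _)
  have e1 : Matrix.scalar (Fin (d i)) c = c • (1 : Matrix (Fin (d i)) (Fin (d i)) ℂ) := by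
    rw [Matrix.smul_one_eq_diagonal]; rfl
  rw [e1, mul_smul_comm, mul_one] at hy
  exact smul_right_injective _ hc0 hy

theorem irr_sum {g : G} (hg : g ≠ 1) : ∑ i, (d i : ℂ) * (irr e i g).trace = 0 := by
  have h1 := trace_pi_mulLeft (e (MonoidAlgebra.of ℂ G g))
  have h2 := trace_reg hg
  have h3 : e.toLinearEquiv.conj (LinearMap.mulLeft ℂ (MonoidAlgebra.of ℂ G g)) =
      LinearMap.mulLeft ℂ (e (MonoidAlgebra.of ℂ G g)) := by
    refine LinearMap.ext (fun v => ?_)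
    rw [LinearEquiv.conj_apply_apply, LinearMap.mulLeft_apply, LinearMap.mulLeft_apply]
    change e (MonoidAlgebra.of ℂ G g * e.symm v) = _
    rw [map_mul, AlgEquiv.apply_symm_apply]
  rw [← h3, LinearMap.trace_conj', h2] at h1
  exact h1.symm

open Classical in
theorem irr_class_integral (i : Fin k) [NeZero (d i)] (g : G) :
    IsIntegral ℤ (((Finset.univ.filter (fun x : G => IsConj g x)).card : ℂ) *
      (irr e i g).trace / d i) := by
  set K := Finset.univ.filter (fun x : G => IsConj g x) with hK
  set Z := ∑ x ∈ K, irr e i x with hZ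
  have hcomm : ∀ y, Commute (irr e i y) Z := by
    intro y
    change irr e i y * Z = Z * irr e i y
    rw [hZ, Finset.mul_sum, Finset.sum_mul]
    simp only [← map_mul]
    refine Finset.sum_bij' (fun x _ => y * x * y⁻¹) (fun x _ => y⁻¹ * x * y) ?_ ?_ ?_ ?_ ?_
    · intro x hx
      simp only [hK, Finset.mem_filter, Finset.mem_univ, true_and] at hx ⊢
      exact hx.trans (isConj_iff.mpr ⟨y, rfl⟩)
    · intro x hx
      simp only [hK, Finset.mem_filter, Finset.mem_univ, true_and] at hx ⊢
      exact hx.trans (isConj_iff.mpr ⟨y⁻¹, by group⟩)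
    · intro x _; group
    · intro x _; group
    · intro x _; congr 1; group
  obtain ⟨w, hw⟩ := irr_schur e i Z hcomm
  have htr : (K.card : ℂ) * (irr e i g).trace = d i * w := by
    have h1 : Z.trace = K.card * (irr e i g).trace := by
      rw [hZ, Matrix.trace_sum, Finset.sum_congr rfl (g := fun _ => (irr e i g).trace),
        Finset.sum_const, nsmul_eq_mul]
      intro x hx
      simp only [hK, Finset.mem_filter, Finset.mem_univ, true_and] at hx
      obtain ⟨c, rfl⟩ := isConj_iff.mp hx
      rw [map_mul, Matrix.trace_mul_comm, ← map_mul]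
      congr 2; group
    rw [← h1, hw]
    simp [Matrix.trace]
  have hd0 : (d i : ℂ) ≠ 0 := by exact_mod_cast NeZero.ne (d i)
  rw [htr, mul_div_cancel_left₀ _ hd0]
  have hZi : IsIntegral ℤ Z := by
    have h1 : Z = MonoidAlgebra.lift ℤ (Matrix (Fin (d i)) (Fin (d i)) ℂ) G (irr e i)
        (∑ x ∈ K, MonoidAlgebra.of ℤ G x) := by
      rw [map_sum, hZ]
      refine Finset.sum_congr rfl (fun x _ => ?_)
      rw [MonoidAlgebra.lift_of]
    rw [h1]
    exact (IsIntegral.of_finite ℤ _).map _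
  rw [hw] at hZi
  have hinj : Function.Injective
      ((Algebra.ofId ℂ (Matrix (Fin (d i)) (Fin (d i)) ℂ)).restrictScalars ℤ) := by
    intro a b hab
    exact FaithfulSMul.algebraMap_injective ℂ (Matrix (Fin (d i)) (Fin (d i)) ℂ) hab
  exact (isIntegral_algHom_iff _ hinj).mp hZi

theorem irr_scalar_trivial [IsSimpleGroup G] (hnc : ¬ ∀ a b : G, a * b = b * a) {g : G}
    (hg : g ≠ 1) (i : Fin k) (h : ∃ c : ℂ, irr e i g = Matrix.scalar (Fin (d i)) c) :
    ∀ x, irr e i x = 1 := by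
  obtain ⟨c, hc⟩ := h
  have hcen : ∀ M : Matrix (Fin (d i)) (Fin (d i)) ℂ, Commute (irr e i g) M := by
    intro M
    rw [hc]
    exact Matrix.scalar_commute c (fun r => Commute.all _ _) M
  have hker : (irr e i).toHomUnits.ker = ⊤ := by
    rcases IsSimpleGroup.eq_bot_or_eq_top_of_normal (irr e i).toHomUnits.ker inferInstance with
      hb | ht
    · exfalso
      have hinj : Function.Injective (irr e i) := by
        have := (MonoidHom.ker_eq_bot_iff _).mp hb
        intro a b hab
        exact this (Units.ext hab)
      have hgc : g ∈ Subgroup.center G := by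
        rw [Subgroup.mem_center_iff]
        intro x
        apply hinj
        rw [map_mul, map_mul]
        exact (hcen _).symm
      rcases IsSimpleGroup.eq_bot_or_eq_top_of_normal (Subgroup.center G) inferInstance with
        h1 | h1
      · rw [h1, Subgroup.mem_bot] at hgc
        exact hg hgc
      · apply hnc
        intro a b
        have : b ∈ Subgroup.center G := by rw [h1]; trivial
        exact Subgroup.mem_center_iff.mp this a
    · exact ht
  intro x
  have : x ∈ (irr e i).toHomUnits.ker := by rw [hker]; trivial
  have h2 := congrArg Units.val (MonoidHom.mem_ker.mp this)
  exact h2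

end WedderburnData

open Classical in
theorem burnside_core {G : Type*} [Group G] [Fintype G] [IsSimpleGroup G]
    (hnc : ¬ ∀ a b : G, a * b = b * a) {g : G} (hg : g ≠ 1) {q b : ℕ} (hq : q.Prime)
    (hcard : (Finset.univ.filter (fun x : G => IsConj g x)).card = q ^ b) : False := by
  obtain ⟨k, d, hd, ⟨e⟩⟩ :=
    IsSemisimpleRing.exists_algEquiv_pi_matrix_of_isAlgClosed ℂ (MonoidAlgebra ℂ G)
  obtain ⟨i0, hi0⟩ := irr_trivial_exists e
  have hsum := irr_sum e hg
  have hn : Fintype.card G ≠ 0 := Fintype.card_ne_zero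
  have hpow : ∀ i, (irr e i g) ^ Fintype.card G = 1 := by
    intro i
    rw [← map_pow, pow_card_eq_one, map_one]
  have hq0 : (q : ℂ) ≠ 0 := by exact_mod_cast hq.ne_zero
  have hterm : ∀ i, i ≠ i0 → ∃ t : ℂ, IsIntegral ℤ t ∧ (d i : ℂ) * (irr e i g).trace = q * t := by
    intro i hne
    have := hd i
    have hd0 : (d i : ℂ) ≠ 0 := by exact_mod_cast NeZero.ne (d i)
    have hintegral := matrix_integral hn (hpow i)
    by_cases hqd : q ∣ d i
    · obtain ⟨m, hm⟩ := hqd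
      refine ⟨m * (irr e i g).trace, (isIntegral_natCast m).mul hintegral, ?_⟩
      have hm2 : (d i : ℂ) = q * m := by exact_mod_cast hm
      rw [hm2, mul_assoc]
    have hcl := irr_class_integral e i g
    rw [hcard] at hcl
    have hcop : IsCoprime ((d i : ℕ) : ℤ) ((q ^ b : ℕ) : ℤ) := by
      rw [Nat.isCoprime_iff_coprime]
      exact (((Nat.Prime.coprime_iff_not_dvd hq).mpr hqd).symm).pow_right b
    obtain ⟨u, v, huv⟩ := hcop
    have huv' : (u : ℂ) * d i + v * ((q ^ b : ℕ) : ℂ) = 1 := by exact_mod_cast huv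
    have hα : IsIntegral ℤ ((irr e i g).trace / d i) := by
      have : (irr e i g).trace / d i =
          u * (irr e i g).trace + v * (((q ^ b : ℕ) : ℂ) * (irr e i g).trace / d i) := by
        calc (irr e i g).trace / d i
            = ((u : ℂ) * d i + v * ((q ^ b : ℕ) : ℂ)) * (irr e i g).trace / d i := by
              rw [huv', one_mul]
          _ = _ := by field_simp
      rw [this]
      exact ((isIntegral_algebraMap (R := ℤ) (x := u)).mul hintegral).add
        ((isIntegral_algebraMap (R := ℤ) (x := v)).mul hcl)
    rcases matrix_lemma hn (hpow i) hα with h0 | hs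
    · exact ⟨0, isIntegral_zero, by rw [h0, mul_zero, mul_zero]⟩
    · exact absurd (irr_trivial_unique e hd (irr_scalar_trivial e hnc hg i hs) hi0) hne
  choose! t ht1 ht2 using hterm
  rw [← Finset.add_sum_erase _ _ (Finset.mem_univ i0), hi0, irr_trivial_dim e hd hi0] at hsum
  rw [Finset.sum_congr rfl (g := fun i => (q : ℂ) * t i)
    (fun i hi => ht2 i (Finset.ne_of_mem_erase hi)), ← Finset.mul_sum, Matrix.trace_one,
    Fintype.card_fin] at hsum
  try rw [irr_trivial_dim e hd hi0] at hsum
  have hTi : IsIntegral ℤ (∑ i ∈ Finset.univ.erase i0, t i) :=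
    IsIntegral.sum _ (fun i hi => ht1 i (Finset.ne_of_mem_erase hi))
  set T := ∑ i ∈ Finset.univ.erase i0, t i
  have hT : T = ((-(1 / q : ℚ) : ℚ) : ℂ) := by
    push_cast
    field_simp
    push_cast at hsum
    linear_combination hsum
  rw [hT] at hTi
  have hTq : IsIntegral ℤ (-(1 / q : ℚ)) := by
    have hinj : Function.Injective (algebraMap ℚ ℂ).toIntAlgHom := (algebraMap ℚ ℂ).injective
    exact (isIntegral_algHom_iff _ hinj).mp hTi
  obtain ⟨z, hz⟩ := IsIntegrallyClosed.isIntegral_iff.mp hTq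
  have hqq : (q : ℚ) ≠ 0 := by exact_mod_cast hq.ne_zero
  have h3 : (z : ℚ) * q = -1 := by
    have : (z : ℚ) = -(1 / q : ℚ) := hz
    rw [this]; field_simp
  have h4 : z * (q : ℤ) = -1 := by exact_mod_cast h3
  have h5 : (q : ℤ) ∣ 1 := ⟨-z, by linarith⟩
  have h6 : q ∣ 1 := by exact_mod_cast h5
  exact hq.one_lt.ne' (Nat.dvd_one.mp h6)

theorem solvable_of_normal {G : Type*} [Group G] (N : Subgroup G) [N.Normal]
    (h1 : Group.IsSolvable N) (h2 : Group.IsSolvable (G ⧸ N)) : Group.IsSolvable G := by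
  refine Group.isSolvable_of_ker_le_range N.subtype (QuotientGroup.mk' N) ?_
  rw [QuotientGroup.ker_mk', Subgroup.range_subtype]

open Classical in
theorem card_class {G : Type*} [Group G] [Fintype G] (g : G) :
    (Finset.univ.filter (fun x : G => IsConj g x)).card =
      (MulAction.stabilizer (ConjAct G) g).index := by
  rw [MulAction.index_stabilizer, Set.ncard_eq_toFinset_card']
  congr 1
  ext x
  rw [Set.mem_toFinset, ConjAct.mem_orbit_conjAct, isConj_comm]
  simp

theorem stab_index_dvd {G : Type*} [Group G] (P : Subgroup G) (z : G)
    (hz : ∀ x ∈ P, x * z = z * x) :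
    (MulAction.stabilizer (ConjAct G) z).index ∣ P.index := by
  let f : G →* ConjAct G := (ConjAct.toConjAct (G := G)).toMonoidHom
  have hf : Function.Surjective f := (ConjAct.toConjAct (G := G)).surjective
  rw [← Subgroup.index_comap_of_surjective (MulAction.stabilizer (ConjAct G) z) hf]
  refine Subgroup.index_dvd_of_le (fun x hx => ?_)
  rw [Subgroup.mem_comap, MulAction.mem_stabilizer_iff]
  change ConjAct.toConjAct x • z = z
  rw [ConjAct.toConjAct_smul, hz x hx, mul_assoc, mul_inv_cancel, mul_one]

theorem burnside_two_three (n : ℕ) : ∀ {G : Type*} [Group G] [Fintype G], Nat.card G = n →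
    (∀ p, p.Prime → p ∣ n → p = 2 ∨ p = 3) → Group.IsSolvable G := by
  induction n using Nat.strong_induction_on with
  | _ n ih =>
  intro G _ _ hcard hpr
  classical
  have hn0 : n ≠ 0 := by rw [← hcard]; exact Nat.card_pos.ne'
  by_cases hN : ∃ N : Subgroup G, N.Normal ∧ N ≠ ⊥ ∧ N ≠ ⊤
  · obtain ⟨N, hNn, hb, ht⟩ := hN
    have hm := N.card_mul_index
    have hi : Nat.card (G ⧸ N) = N.index := rfl
    have h1 : 1 < Nat.card N := by
      have := Nat.card_pos (α := N)
      have h2 : Nat.card N ≠ 1 := fun h => hb (Subgroup.card_eq_one.mp h)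
      omega
    have h2 : 1 < N.index := by
      have h3 : N.index ≠ 0 := Subgroup.index_ne_zero_of_finite
      have h4 : N.index ≠ 1 := fun h => ht (Subgroup.index_eq_one.mp h)
      omega
    rw [hcard] at hm
    refine solvable_of_normal N (ih (Nat.card N) (by nlinarith) rfl ?_)
      (ih (Nat.card (G ⧸ N)) (by rw [hi]; nlinarith) rfl ?_)
    · exact fun p hp hd => hpr p hp (hd.trans ⟨_, hm.symm⟩)
    · rw [hi]
      exact fun p hp hd => hpr p hp (hd.trans ⟨_, (mul_comm _ _).trans hm |>.symm⟩)
  by_cases hcomm : ∀ a b : G, a * b = b * a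
  · exact Group.isSolvable_of_comm hcomm
  have hnt : Nontrivial G := by
    by_contra h
    rw [not_nontrivial_iff_subsingleton] at h
    exact hcomm (fun a b => Subsingleton.elim _ _)
  have hsimp : IsSimpleGroup G := by
    refine ⟨fun N hNn => ?_⟩
    by_contra h
    rw [not_or] at h
    exact hN ⟨N, hNn, h.1, h.2⟩
  by_cases h2 : 2 ∣ n
  · exfalso
    have : Fact (Nat.Prime 2) := ⟨Nat.prime_two⟩
    let P : Sylow 2 G := Classical.arbitrary _
    have hPnt : Nontrivial P := by
      rw [← Finite.one_lt_card_iff_nontrivial]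
      have := P.dvd_card_of_dvd_card (hcard ▸ h2)
      exact lt_of_lt_of_le (by norm_num) (Nat.le_of_dvd Nat.card_pos this)
    have hcn := P.2.center_nontrivial
    obtain ⟨⟨⟨z, hzP⟩, hzc⟩, hz1⟩ := exists_ne (1 : Subgroup.center P)
    have hz : z ≠ 1 := by
      rintro rfl
      exact hz1 (Subtype.ext (Subtype.ext rfl))
    have hzcomm : ∀ x ∈ (P : Subgroup G), x * z = z * x := by
      intro x hx
      exact congrArg Subtype.val (Subgroup.mem_center_iff.mp hzc ⟨x, hx⟩)
    have hdvd : (MulAction.stabilizer (ConjAct G) z).index ∣ (P : Subgroup G).index :=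
      stab_index_dvd _ z hzcomm
    have hodd : ¬ 2 ∣ (P : Subgroup G).index := P.not_dvd_index
    have hpn : (P : Subgroup G).index ∣ n := by
      rw [← hcard]; exact Subgroup.index_dvd_card _
    have hpow := Nat.eq_prime_pow_of_unique_prime_dvd (p := 3)
      (n := (MulAction.stabilizer (ConjAct G) z).index)
      (fun h => by rw [h, zero_dvd_iff] at hdvd; rw [hdvd] at hodd; exact hodd (dvd_zero _))
      (fun {q} hq hd => by
        rcases hpr q hq ((hd.trans hdvd).trans hpn) with rfl | h
        · exact absurd (hd.trans hdvd) hodd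
        · exact h)
    exact burnside_core hcomm hz Nat.prime_three ((card_class z).trans hpow)
  · have : Fact (Nat.Prime 3) := ⟨Nat.prime_three⟩
    have hpow := Nat.eq_prime_pow_of_unique_prime_dvd (p := 3) hn0
      (fun {q} hq hd => by
        rcases hpr q hq hd with rfl | h
        · exact absurd hd h2
        · exact h)
    have h3 : IsPGroup 3 G := IsPGroup.of_card (hcard.trans hpow)
    have := h3.isNilpotent
    infer_instance

theorem wt_dvd {a b : ℕ} (hb : 0 < b) (h : a ∣ b) : wt b ≤ wt a := by
  have ha : 0 < a := Nat.pos_of_dvd_of_pos h hb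
  have hle := Nat.le_of_dvd hb h
  have hle' : (a : ℚ) ≤ b := by exact_mod_cast hle
  unfold wt
  split_ifs with h1 h2 h2
  · exact le_rfl
  · subst h1
    have : a = 1 := by
      have : a ≤ 2 := hle
      omega
    subst this; norm_num
  · subst h2
    obtain ⟨c, rfl⟩ := h
    have : 2 ≤ c := by
      rcases c with _ | _ | c
      · omega
      · omega
      · omega
    have : (2 : ℚ) ≤ c := by exact_mod_cast this
    push_cast; linarith
  · linarith

theorem weight_quotient {G : Type*} [Group G] [Fintype G] {Q : Type*} [Group Q] [Fintype Q]
    (f : G →* Q) (hf : Function.Surjective f)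
    (h : 7 / 20 * (Fintype.card G : ℚ) < ∑ x : G, wt (orderOf x)) :
    7 / 20 * (Fintype.card Q : ℚ) < ∑ y : Q, wt (orderOf y) := by
  classical
  have h1 : ∑ x : G, wt (orderOf x) ≤ ∑ x : G, wt (orderOf (f x)) :=
    Finset.sum_le_sum (fun x _ => wt_dvd (orderOf_pos x) (orderOf_map_dvd f x))
  set c := (Finset.univ.filter (fun x : G => f x = 1)).card with hc
  have hfib : ∀ y : Q, (Finset.univ.filter (fun x : G => f x = y)).card = c := fun y =>
    MonoidHom.card_fiber_eq_of_mem_range f (hf y) (hf 1)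
  have himg : Finset.univ.image f = (Finset.univ : Finset Q) :=
    Finset.image_univ_of_surjective hf
  have h2 : ∑ x : G, wt (orderOf (f x)) = c * ∑ y : Q, wt (orderOf y) := by
    rw [Finset.sum_comp (fun y => wt (orderOf y)) f, himg, Finset.mul_sum]
    refine Finset.sum_congr rfl (fun y _ => ?_)
    rw [hfib, nsmul_eq_mul]
  have h3 : (Fintype.card G : ℚ) = c * Fintype.card Q := by
    have : ∑ x : G, (1 : ℚ) = c * ∑ y : Q, (1 : ℚ) := by
      rw [Finset.sum_comp (fun _ : Q => (1 : ℚ)) f, himg, Finset.mul_sum]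
      refine Finset.sum_congr rfl (fun y _ => ?_)
      rw [hfib, nsmul_eq_mul]
    simpa using this
  have hc0 : (0 : ℚ) ≤ c := by positivity
  by_contra hcon
  push Not at hcon
  have := mul_le_mul_of_nonneg_left hcon hc0
  rw [h3] at h
  linarith

theorem solvable_of_weight (n : ℕ) : ∀ {G : Type*} [Group G] [Fintype G], Fintype.card G = n →
    7 / 20 * (Fintype.card G : ℚ) < ∑ x : G, wt (orderOf x) → Group.IsSolvable G := by
  induction n using Nat.strong_induction_on with
  | _ n ih =>
  intro G _ _ hcard hw
  classical
  by_cases hR : ∃ p : ℕ, p.Prime ∧ ∃ R : Subgroup G, R.Normal ∧ IsPGroup p R ∧ R ≠ ⊥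
  · obtain ⟨p, hp, R, hRn, hRp, hRb⟩ := hR
    have : Fact p.Prime := ⟨hp⟩
    have hnil := hRp.isNilpotent
    refine solvable_of_normal R inferInstance
      (ih (Fintype.card (G ⧸ R)) ?_ rfl
        (weight_quotient (QuotientGroup.mk' R) (QuotientGroup.mk'_surjective R) hw))
    have hm := R.card_mul_index
    have hi : Nat.card (G ⧸ R) = R.index := rfl
    have h1 : 1 < Nat.card R := by
      have := Nat.card_pos (α := R)
      have h2 : Nat.card R ≠ 1 := fun h => hRb (Subgroup.card_eq_one.mp h)
      omega
    have h3 : 0 < R.index := Nat.pos_of_ne_zero Subgroup.index_ne_zero_of_finite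
    rw [Nat.card_eq_fintype_card (α := G), hcard] at hm
    rw [← Nat.card_eq_fintype_card, hi]
    nlinarith
  · refine burnside_two_three n (by rw [Nat.card_eq_fintype_card, hcard]) (fun p hp hd => ?_)
    by_contra hne
    have : Fact p.Prime := ⟨hp⟩
    have h5 : 5 ≤ p := by
      by_contra hlt
      have h2 := hp.two_le
      have : p = 4 := by omega
      subst this
      revert hp; norm_num
    have := weight_bound (G := G) (p := p) h5 (by rw [Nat.card_eq_fintype_card, hcard]; exact hd)
      (fun R hRn hRp => by
        by_contra hb
        exact hR ⟨p, hp, R, hRn, hRp, hb⟩)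
    linarith

theorem avgOrder_gt_A5_of_few_involutions {G : Type*} [Group G] [Fintype G]
    (hns : ¬ IsSolvable G)
    (h : (numOrderTwo G : ℚ) < (Fintype.card G : ℚ) / 15) :
    211 / 60 < avgOrder G := by
  by_contra hcon
  apply hns
  refine solvable_of_weight (Fintype.card G) rfl ?_
  have hpos : (0 : ℚ) < Fintype.card G := by exact_mod_cast Fintype.card_pos
  unfold avgOrder at hcon
  rw [not_lt, div_le_iff₀ hpos] at hcon
  unfold numOrderTwo at h
  have hw : ∑ x : G, wt (orderOf x) = 4 * (Fintype.card G : ℚ) - ∑ x : G, (orderOf x : ℚ)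
      - 2 * ((Finset.univ.filter fun g : G => orderOf g = 2).card : ℚ) := by
    have e : ∀ x : G, wt (orderOf x) =
        4 - (orderOf x : ℚ) - 2 * (if orderOf x = 2 then 1 else 0) := by
      intro x
      unfold wt
      split_ifs with h2
      · rw [h2]; norm_num
      · ring
    simp only [e, Finset.sum_sub_distrib, ← Finset.mul_sum, Finset.sum_boole]
    simp [mul_comm]
  rw [hw]
  linarith
end

section
/- Let G be a finite non-solvable group such that the number i₂(G) of elements of order 2 satisfies i₂(G) ≤ |G|/16 and the number i₃(G) of elements of order 3 satisfies i₃(G) + 1 ≤ |G|/14. Then o(G) > 19/5. -/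
/-- `i₃(G)`: the number of elements of order exactly 3 in `G`. -/
noncomputable def numOrderThree (G : Type*) [Group G] [Fintype G] : ℕ :=
  (Finset.univ.filter fun g : G => orderOf g = 3).card


/-- Conjugation action of a subgroup on the set of elements of given order. -/
def conjActOrder {G : Type*} [Group G] (S : Subgroup G) (q : ℕ) :
    MulAction S {x : G // orderOf x = q} where
  smul s x := ⟨s * x.1 * (s : G)⁻¹, by
    have := orderOf_injective (MulAut.conj (s : G)).toMonoidHom
      (MulAut.conj (s : G)).injective x.1
    simpa [x.2] using this⟩
  one_smul x := Subtype.ext (by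
    change ((1 : S) : G) * x.1 * ((1 : S) : G)⁻¹ = x.1
    simp)
  mul_smul s t x := Subtype.ext (by
    change ((s * t : S) : G) * x.1 * ((s * t : S) : G)⁻¹
      = (s : G) * ((t : G) * x.1 * (t : G)⁻¹) * (s : G)⁻¹
    simp [mul_assoc])

lemma card_dvd_of_free {G : Type*} [Group G] [Fintype G] (S : Subgroup G) (q : ℕ)
    (h : ∀ s ∈ S, s ≠ 1 → ∀ x : G, orderOf x = q → ¬ Commute s x) :
    Nat.card S ∣ (Finset.univ.filter fun g : G => orderOf g = q).card := by
  letI := conjActOrder S q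
  have e := MulAction.selfEquivOrbitsQuotientProd (G := S) (X := {x : G // orderOf x = q})
    (fun x => by
      rw [eq_bot_iff]
      intro s hs
      rw [MulAction.mem_stabilizer_iff] at hs
      have hs' : (s : G) * x.1 * (s : G)⁻¹ = x.1 := congrArg Subtype.val hs
      rw [Subgroup.mem_bot]
      by_contra hne
      refine h s s.2 (fun h1 => hne (Subtype.ext h1)) x.1 x.2 ?_
      exact mul_inv_eq_iff_eq_mul.mp hs')
  have hc := Nat.card_congr e
  rw [Nat.card_prod, Nat.card_eq_fintype_card (α := {x : G // orderOf x = q}),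
    Fintype.card_subtype] at hc
  exact ⟨_, hc.trans (mul_comm _ _)⟩

lemma free_of_orders {G : Type*} [Group G] [Fintype G] (h4 : ∀ x : G, orderOf x ≤ 4)
    (S : Subgroup G) (p q a : ℕ) (hp : p.Prime) (hq : q.Prime) (hpq : p ≠ q) (h5 : 4 < p * q)
    (hS : Nat.card S = p ^ a) :
    p ^ a ∣ (Finset.univ.filter fun g : G => orderOf g = q).card := by
  rw [← hS]
  apply card_dvd_of_free
  intro s hs hs1 x hx hc
  have hd : orderOf s ∣ p ^ a := by
    rw [← hS]; exact Subgroup.orderOf_dvd_natCard S hs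
  obtain ⟨k, -, hk⟩ := (Nat.dvd_prime_pow hp).mp hd
  have hk0 : k ≠ 0 := by
    rintro rfl
    exact hs1 (orderOf_eq_one_iff.mp (by simpa using hk))
  have hcop : (orderOf s).Coprime (orderOf x) := by
    rw [hk, hx]
    exact Nat.Coprime.pow_left _ ((Nat.coprime_primes hp hq).mpr hpq)
  have hm := hc.orderOf_mul_eq_mul_orderOf_of_coprime hcop
  have h4' := h4 (s * x)
  rw [hm, hk, hx] at h4'
  have : p ≤ p ^ k := Nat.le_self_pow hk0 p
  have := Nat.mul_le_mul_right q this
  omega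

lemma solvable_of_card_pow {G : Type*} [Group G] [Fintype G] (p a : ℕ) (hp : p.Prime)
    (h : Nat.card G = p ^ a) : IsSolvable G := by
  haveI := Fact.mk hp
  haveI := (IsPGroup.of_card h).isNilpotent
  exact (inferInstance : Group.IsSolvable G)

lemma no_small_group {G : Type*} [Group G] [Fintype G] (hns : ¬ IsSolvable G)
    (h4 : ∀ x : G, orderOf x ≤ 4) (hn : Nat.card G ≤ 560)
    (h2 : 16 * (Finset.univ.filter fun g : G => orderOf g = 2).card ≤ Nat.card G)
    (h3 : 14 * ((Finset.univ.filter fun g : G => orderOf g = 3).card + 1) ≤ Nat.card G) :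
    False := by
  have hpos : Nat.card G ≠ 0 := Nat.card_pos.ne'
  obtain ⟨a, m, hm2, hm⟩ := Nat.exists_eq_pow_mul_and_not_dvd hpos 2 (by norm_num)
  have hm0 : m ≠ 0 := by rintro rfl; simp at hm2
  obtain ⟨b, k, hk3, hk⟩ := Nat.exists_eq_pow_mul_and_not_dvd hm0 3 (by norm_num)
  have hk1 : k = 1 := by
    by_contra hk1
    obtain ⟨p, hp, hpk⟩ := Nat.exists_prime_and_dvd hk1
    haveI := Fact.mk hp
    have hpm : p ∣ m := hk ▸ hpk.mul_left _
    obtain ⟨x, hx⟩ := exists_prime_orderOf_dvd_card' (G := G) p (hm ▸ hpm.mul_left _)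
    have hx4 := h4 x
    rw [hx] at hx4
    interval_cases p
    · exact absurd hp (by norm_num)
    · exact absurd hp (by norm_num)
    · exact hm2 hpm
    · exact hk3 hpk
    · exact absurd hp (by norm_num)
  subst hk1
  rw [mul_one] at hk
  subst hk
  have ha0 : a ≠ 0 := by
    rintro rfl
    exact hns (solvable_of_card_pow 3 b Nat.prime_three (by simpa using hm))
  have hb0 : b ≠ 0 := by
    rintro rfl
    exact hns (solvable_of_card_pow 2 a Nat.prime_two (by simpa using hm))
  haveI := Fact.mk Nat.prime_two
  haveI := Fact.mk Nat.prime_three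
  obtain ⟨S, hS⟩ := Sylow.exists_subgroup_card_pow_prime (G := G) 2 (n := a) (hm ▸ dvd_mul_right _ _)
  obtain ⟨T, hT⟩ := Sylow.exists_subgroup_card_pow_prime (G := G) 3 (n := b) (hm ▸ dvd_mul_left _ _)
  have d3 := free_of_orders h4 S 2 3 a Nat.prime_two Nat.prime_three (by norm_num) (by norm_num) hS
  have d2 := free_of_orders h4 T 3 2 b Nat.prime_three Nat.prime_two (by norm_num) (by norm_num) hT
  obtain ⟨x, hx⟩ := exists_prime_orderOf_dvd_card' (G := G) 2
    (hm ▸ (dvd_pow_self 2 ha0).mul_right _)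
  obtain ⟨y, hy⟩ := exists_prime_orderOf_dvd_card' (G := G) 3
    (hm ▸ (dvd_pow_self 3 hb0).mul_left _)
  have l2 := Nat.le_of_dvd (Finset.card_pos.mpr ⟨x, by simpa using hx⟩) d2
  have l3 := Nat.le_of_dvd (Finset.card_pos.mpr ⟨y, by simpa using hy⟩) d3
  -- the nontrivial elements of `T` have order 3
  have lT : 3 ^ b ≤ (Finset.univ.filter fun g : G => orderOf g = 3).card + 1 := by
    classical
    have hsub : (Finset.univ.filter fun g : G => g ∈ T) ⊆
        insert 1 (Finset.univ.filter fun g : G => orderOf g = 3) := by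
      intro g hg
      simp only [Finset.mem_filter, Finset.mem_univ, true_and, Finset.mem_insert] at hg ⊢
      have hd : orderOf g ∣ 3 ^ b := by
        rw [← hT]; exact Subgroup.orderOf_dvd_natCard T hg
      obtain ⟨j, -, hj⟩ := (Nat.dvd_prime_pow Nat.prime_three).mp hd
      have hg4 := h4 g
      rw [hj] at hg4
      match j, hj, hg4 with
      | 0, hj, _ => left; exact orderOf_eq_one_iff.mp (by simpa using hj)
      | 1, hj, _ => right; simpa using hj
      | j + 2, _, hg4 =>
        have := Nat.one_le_pow j 3 (by norm_num)
        rw [pow_add] at hg4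
        omega
    have hc := (Finset.card_le_card hsub).trans (Finset.card_insert_le _ _)
    rw [← Fintype.card_subtype, ← Nat.card_eq_fintype_card] at hc
    rw [← hT]
    exact hc
  generalize (Finset.univ.filter fun g : G => orderOf g = 3).card = i3 at *
  generalize (Finset.univ.filter fun g : G => orderOf g = 2).card = i2 at *
  rw [hm] at h2 h3 hn
  have p2 : 0 < 2 ^ a := by positivity
  have p3 : 0 < 3 ^ b := by positivity
  have A : 16 ≤ 2 ^ a := by
    by_contra! hlt
    nlinarith
  have B : 14 < 3 ^ b := by
    by_contra! hlt
    nlinarith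
  have hb : 2 < b := by
    by_contra! hlt
    interval_cases b <;> simp at B
  have ha : 3 < a := by
    by_contra! hlt
    interval_cases a <;> simp at A
  have B' : 3 ^ 3 ≤ 3 ^ b := Nat.pow_le_pow_right (by norm_num) hb
  have A' : 2 ^ 4 ≤ 2 ^ a := Nat.pow_le_pow_right (by norm_num) ha
  have ha' : a < 5 := by
    by_contra! hlt
    have : 2 ^ 5 ≤ 2 ^ a := Nat.pow_le_pow_right (by norm_num) hlt
    nlinarith
  have hb' : b < 4 := by
    by_contra! hlt
    have : 3 ^ 4 ≤ 3 ^ b := Nat.pow_le_pow_right (by norm_num) hlt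
    nlinarith
  obtain rfl : a = 4 := by omega
  obtain rfl : b = 3 := by omega
  norm_num at *
  omega

theorem avgOrder_gt_of_few_small_order {G : Type*} [Group G] [Fintype G]
    (hns : ¬ IsSolvable G)
    (h2 : (numOrderTwo G : ℚ) ≤ (Fintype.card G : ℚ) / 16)
    (h3 : (numOrderThree G : ℚ) + 1 ≤ (Fintype.card G : ℚ) / 14) :
    19 / 5 < avgOrder G := by
  classical
  unfold numOrderTwo at h2
  unfold numOrderThree at h3
  have hpos : (0 : ℚ) < Fintype.card G := by exact_mod_cast Fintype.card_pos
  unfold avgOrder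
  rw [lt_div_iff₀ hpos]
  -- pointwise bound
  have key : ∀ E : Finset G, (∀ x ∈ E, 5 ≤ orderOf x) →
      4 * (Fintype.card G : ℚ) + E.card ≤ (∑ x : G, (orderOf x : ℚ)) + 3
        + 2 * (Finset.univ.filter fun g : G => orderOf g = 2).card
        + (Finset.univ.filter fun g : G => orderOf g = 3).card := by
    intro E hE
    have hpt : ∀ x : G, 4 + (if x ∈ E then 1 else 0) ≤ orderOf x + (if x = 1 then 3 else 0)
        + 2 * (if orderOf x = 2 then 1 else 0) + (if orderOf x = 3 then 1 else 0) := by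
      intro x
      have h0 := orderOf_pos x
      have h1 : orderOf x = 1 ↔ x = 1 := orderOf_eq_one_iff
      have h5 := hE x
      by_cases hxE : x ∈ E
      · have := h5 hxE
        simp only [hxE, if_true]
        omega
      · simp only [hxE, if_false]
        by_cases hx1 : x = 1
        · have := h1.mpr hx1
          simp only [hx1, if_true]
          simp
        · have : orderOf x ≠ 1 := fun h => hx1 (h1.mp h)
          simp only [hx1, if_false]
          split_ifs <;> omega
    have hs := Finset.sum_le_sum (s := Finset.univ) (fun x _ => hpt x)
    simp only [Finset.sum_add_distrib, ← Finset.mul_sum, Finset.sum_boole] at hs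
    simp at hs
    have hs' : ((Fintype.card G * 4 + E.card : ℕ) : ℚ) ≤ _ := Nat.cast_le.mpr hs
    push_cast at hs'
    linarith
  by_cases h4 : ∀ x : G, orderOf x ≤ 4
  · have hn : ¬ Nat.card G ≤ 560 := by
      intro hn
      refine no_small_group hns h4 hn ?_ ?_
      · rw [Nat.card_eq_fintype_card]
        have : (16 * (Finset.univ.filter fun g : G => orderOf g = 2).card : ℚ)
          ≤ Fintype.card G := by linarith
        exact_mod_cast this
      · rw [Nat.card_eq_fintype_card]
        have : (14 * ((Finset.univ.filter fun g : G => orderOf g = 3).card + 1) : ℚ)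
          ≤ Fintype.card G := by linarith
        exact_mod_cast this
    rw [Nat.card_eq_fintype_card, not_le] at hn
    have hn' : (560 : ℚ) < Fintype.card G := by exact_mod_cast hn
    have := key ∅ (by simp)
    simp only [Finset.card_empty, Nat.cast_zero] at this
    linarith
  · push Not at h4
    obtain ⟨x, hx⟩ := h4
    have hne : x ≠ x⁻¹ := by
      intro h
      have : x ^ 2 = 1 := by
        rw [pow_two]; nth_rewrite 2 [h]; simp
      have := orderOf_le_of_pow_eq_one (by norm_num) this
      omega
    have := key {x, x⁻¹} (by
      intro y hy
      simp only [Finset.mem_insert, Finset.mem_singleton] at hy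
      rcases hy with rfl | rfl
      · omega
      · rw [orderOf_inv]; omega)
    rw [Finset.card_pair hne] at this
    push_cast at this
    linarith
end

section
/- Let n ≥ 5 be a natural number and let A_n denote the alternating group on n letters. Then either n = 5 or o(A_n) ≥ 71/20. -/
open Equiv Function

/-- The number of permutations with sign `s` whose cycle through `a` has length `k`. -/
noncomputable def cycCount {α : Type} [Fintype α] [DecidableEq α] (s : ℤˣ) (k : ℕ) (a : α) : ℕ :=
  ∑ x : Perm α, if Perm.sign x = s ∧ minimalPeriod x a = k then 1 else 0

theorem perm_minimalPeriod_dvd {α : Type} (x : Perm α) (a : α) :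
    minimalPeriod x a ∣ orderOf x := by
  apply IsPeriodicPt.minimalPeriod_dvd
  have h : (x ^ orderOf x) a = a := by rw [pow_orderOf_eq_one]; rfl
  rwa [IsPeriodicPt, IsFixedPt, Perm.iterate_eq_pow]

theorem perm_minimalPeriod_pos {α : Type} [Fintype α] (x : Perm α) (a : α) :
    0 < minimalPeriod x a :=
  Nat.pos_of_dvd_of_pos (perm_minimalPeriod_dvd x a) (orderOf_pos x)

theorem minimalPeriod_option {β : Type} [Fintype β] [DecidableEq β] (a : β) (σ : Perm β) :
    minimalPeriod (swap none (some a) * σ.optionCongr) none = minimalPeriod σ a + 1 := by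
  set f : Perm (Option β) := swap none (some a) * σ.optionCongr with hf
  have hm := perm_minimalPeriod_pos σ a
  have hsome : ∀ b, σ b ≠ a → f (some b) = some (σ b) := by
    intro b hb
    simp only [hf, Perm.mul_apply, optionCongr_apply, Option.map_some]
    exact swap_apply_of_ne_of_ne (by simp) (by simpa using hb)
  have key : ∀ j, j < minimalPeriod σ a → f^[j + 1] none = some (σ^[j] a) := by
    intro j
    induction j with
    | zero => intro _; simp [hf]
    | succ j ih =>
      intro hj
      rw [iterate_succ_apply', ih (by omega), iterate_succ_apply' σ]
      apply hsome
      rw [← iterate_succ_apply' σ]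
      intro h
      exact not_isPeriodicPt_of_pos_of_lt_minimalPeriod (Nat.succ_ne_zero j) hj h
  have hend : f^[minimalPeriod σ a + 1] none = none := by
    obtain ⟨m, hmm⟩ : ∃ m, minimalPeriod σ a = m + 1 := ⟨minimalPeriod σ a - 1, by omega⟩
    rw [iterate_succ_apply', hmm, key m (by omega)]
    have : σ (σ^[m] a) = a := by
      rw [← iterate_succ_apply' σ, ← Nat.succ_eq_add_one] at *
      have := iterate_minimalPeriod (f := σ) (x := a)
      rwa [hmm] at this
    simp [hf, this]
  have hle : minimalPeriod f none ≤ minimalPeriod σ a + 1 :=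
    IsPeriodicPt.minimalPeriod_le (Nat.succ_pos _) hend
  have hpos := perm_minimalPeriod_pos f none
  by_contra hne
  obtain ⟨d, hd⟩ : ∃ d, minimalPeriod f none = d + 1 := ⟨minimalPeriod f none - 1, by omega⟩
  have h1 := key d (by omega)
  have h2 := iterate_minimalPeriod (f := f) (x := none)
  rw [hd, h1] at h2
  exact absurd h2 (by simp)

theorem cycCount_zero {α : Type} [Fintype α] [DecidableEq α] (s : ℤˣ) (a : α) :
    cycCount s 0 a = 0 := by
  unfold cycCount
  apply Finset.sum_eq_zero
  intro x _
  have := perm_minimalPeriod_pos x a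
  rw [if_neg]; omega

theorem cycCount_option {β : Type} [Fintype β] [DecidableEq β] (s : ℤˣ) (k : ℕ) :
    cycCount s (k + 1) (none : Option β) =
      (if k = 0 then ∑ σ : Perm β, (if Perm.sign σ = s then 1 else 0) else 0) +
        ∑ a : β, cycCount (-s) k a := by
  unfold cycCount
  rw [← Perm.decomposeOption.symm.sum_comp, Fintype.sum_prod_type, Fintype.sum_option]
  congr 1
  · have : ∀ σ : Perm β, minimalPeriod (Perm.decomposeOption.symm (none, σ)) none = 1 := by
      intro σ
      rw [minimalPeriod_eq_one_iff_isFixedPt]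
      simp [IsFixedPt]
    simp only [this, Perm.decomposeOption_symm_sign]
    by_cases hk : k = 0
    · simp [hk]
    · have : ¬ (1 = k + 1) := by omega
      simp [hk]
  · refine Finset.sum_congr rfl fun a _ => Finset.sum_congr rfl fun σ _ => ?_
    rw [Perm.decomposeOption_symm_apply]
    simp only [minimalPeriod_option, Nat.add_right_cancel_iff]
    congr 1
    simp [neg_eq_iff_eq_neg]

theorem cycCount_congr {α β : Type} [Fintype α] [DecidableEq α] [Fintype β] [DecidableEq β]
    (e : α ≃ β) (s : ℤˣ) (k : ℕ) (a : α) : cycCount s k (e a) = cycCount s k a := by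
  unfold cycCount
  rw [← (e.permCongr).sum_comp]
  refine Finset.sum_congr rfl fun x _ => ?_
  have h : minimalPeriod (e.permCongr x) (e a) = minimalPeriod x a := by
    rw [minimalPeriod_eq_minimalPeriod_iff]
    intro n
    have : ∀ n, (e.permCongr x)^[n] (e a) = e (x^[n] a) := by
      intro n
      induction n with
      | zero => rfl
      | succ n ih => rw [iterate_succ_apply', ih, iterate_succ_apply']; simp
    simp [IsPeriodicPt, IsFixedPt, this]
  rw [h, Perm.sign_permCongr]

theorem sign_count {β : Type} [Fintype β] [DecidableEq β] (h : 2 ≤ Fintype.card β) (s : ℤˣ) :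
    2 * ∑ σ : Perm β, (if Perm.sign σ = s then 1 else 0) = (Fintype.card β).factorial := by
  have : Nontrivial β := Fintype.one_lt_card_iff_nontrivial.1 h
  obtain ⟨a, b, hab⟩ := exists_pair_ne β
  have h1 : ∑ σ : Perm β, (if Perm.sign σ = s then 1 else 0) =
      ∑ σ : Perm β, (if Perm.sign σ = -s then 1 else 0) := by
    rw [← Equiv.sum_comp (Equiv.mulLeft (swap a b))]
    refine Finset.sum_congr rfl fun σ _ => ?_
    simp [Perm.sign_swap hab, neg_eq_iff_eq_neg]
  rw [two_mul]
  nth_rewrite 2 [h1]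
  rw [← Finset.sum_add_distrib, ← Fintype.card_perm, Fintype.card, Finset.card_eq_sum_ones]
  refine Finset.sum_congr rfl fun σ _ => ?_
  rcases Int.units_eq_one_or (Perm.sign σ) with h | h <;>
  rcases Int.units_eq_one_or s with h' | h' <;> rw [h, h'] <;> decide

theorem cycCount_eq (k : ℕ) : ∀ (α : Type) [Fintype α] [DecidableEq α] (s : ℤˣ) (a : α),
    k + 3 ≤ Fintype.card α → 2 * cycCount s (k + 1) a = (Fintype.card α - 1).factorial := by
  induction k with
  | zero =>
    intro α _ _ s a h
    have hc : Fintype.card {b // b ≠ a} = Fintype.card α - 1 := by simp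
    rw [← cycCount_congr (Equiv.optionSubtypeNe a).symm, Equiv.optionSubtypeNe_symm_self,
      cycCount_option, if_pos rfl]
    simp only [cycCount_zero, Finset.sum_const_zero, add_zero]
    rw [sign_count (by omega), hc]
  | succ k ih =>
    intro α _ _ s a h
    have hc : Fintype.card {b // b ≠ a} = Fintype.card α - 1 := by simp
    rw [← cycCount_congr (Equiv.optionSubtypeNe a).symm, Equiv.optionSubtypeNe_symm_self,
      cycCount_option, if_neg (by omega), zero_add, Finset.mul_sum]
    rw [Finset.sum_congr rfl fun b _ => ih {b // b ≠ a} (-s) b (by omega)]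
    rw [Finset.sum_const, Finset.card_univ, hc, smul_eq_mul,
      Nat.mul_factorial_pred (by omega)]

theorem sum_alt {α : Type} [Fintype α] [DecidableEq α] (f : Perm α → ℕ) :
    ∑ x : alternatingGroup α, f x = ∑ x : Perm α, if Perm.sign x = 1 then f x else 0 := by
  rw [← Finset.sum_filter]
  symm
  apply Finset.sum_subtype
  intro x
  simp [Perm.mem_alternatingGroup]

theorem alt_large (n : ℕ) (hn : 7 ≤ n) :
    71 * Fintype.card (alternatingGroup (Fin n)) ≤
      20 * ∑ x : alternatingGroup (Fin n), orderOf (x : Perm (Fin n)) := by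
  have : Nontrivial (Fin n) := Fin.nontrivial_iff_two_le.2 (by omega)
  let a : Fin n := ⟨0, by omega⟩
  have hN := two_mul_card_alternatingGroup (α := Fin n)
  rw [Fintype.card_perm, Fintype.card_fin] at hN
  have hs : (∑ x : alternatingGroup (Fin n), 5 : ℕ) ≤
      (∑ x : alternatingGroup (Fin n), orderOf (x : Perm (Fin n))) +
      (4 * cycCount 1 1 a + 3 * cycCount 1 2 a + 2 * cycCount 1 3 a + cycCount 1 4 a) := by
    rw [sum_alt (fun _ => 5), sum_alt (fun x => orderOf x)]
    unfold cycCount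
    simp only [Finset.mul_sum, ← Finset.sum_add_distrib]
    refine Finset.sum_le_sum fun x _ => ?_
    by_cases h : Perm.sign x = 1
    · have h1 := perm_minimalPeriod_pos x a
      have h2 := Nat.le_of_dvd (orderOf_pos x) (perm_minimalPeriod_dvd x a)
      simp only [h, if_true, true_and]
      split_ifs <;> omega
    · simp [h]
  have c1 := cycCount_eq 0 (Fin n) 1 a (by simp; omega)
  have c2 := cycCount_eq 1 (Fin n) 1 a (by simp; omega)
  have c3 := cycCount_eq 2 (Fin n) 1 a (by simp; omega)
  have c4 := cycCount_eq 3 (Fin n) 1 a (by simp; omega)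
  simp only [Fintype.card_fin, Nat.reduceAdd, zero_add] at c1 c2 c3 c4
  have hf : n * (n - 1).factorial = n.factorial := Nat.mul_factorial_pred (by omega)
  have h7 : 7 * (n - 1).factorial ≤ n.factorial := by
    rw [← hf]; exact Nat.mul_le_mul_right _ hn
  rw [Finset.sum_const, Finset.card_univ, smul_eq_mul] at hs
  omega

theorem alt_six :
    71 * Fintype.card (alternatingGroup (Fin 6)) ≤
      20 * ∑ x : alternatingGroup (Fin 6), orderOf (x : Perm (Fin 6)) := by
  have hN := two_mul_card_alternatingGroup (α := Fin 6)
  rw [Fintype.card_perm, Fintype.card_fin] at hN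
  have h5 := AlternatingGroup.card_of_cycleType (Fin 6) {5}
  have h4 := AlternatingGroup.card_of_cycleType (Fin 6) {4, 2}
  have e5 : (Finset.univ.filter fun g : alternatingGroup (Fin 6) =>
      (g : Perm (Fin 6)).cycleType = {5}).card = 144 := by
    rw [h5]; decide
  have e4 : (Finset.univ.filter fun g : alternatingGroup (Fin 6) =>
      (g : Perm (Fin 6)).cycleType = {4, 2}).card = 90 := by
    rw [h4]; decide
  have hs : (∑ x : alternatingGroup (Fin 6), (2 +
      (3 * (if (x : Perm (Fin 6)).cycleType = {5} then 1 else 0) +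
      2 * (if (x : Perm (Fin 6)).cycleType = {4, 2} then 1 else 0)))) ≤
      ∑ x : alternatingGroup (Fin 6), (orderOf (x : Perm (Fin 6)) + if x = 1 then 1 else 0) := by
    refine Finset.sum_le_sum fun x _ => ?_
    have hpos := orderOf_pos (x : Perm (Fin 6))
    have hl := Perm.lcm_cycleType (x : Perm (Fin 6))
    by_cases h5 : (x : Perm (Fin 6)).cycleType = {5}
    · rw [h5] at hl ⊢
      have : ({5} : Multiset ℕ) ≠ {4, 2} := by decide
      have h' : ({5} : Multiset ℕ).lcm = 5 := by decide
      rw [if_pos rfl, if_neg this]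
      omega
    · by_cases h4 : (x : Perm (Fin 6)).cycleType = {4, 2}
      · rw [h4] at hl ⊢
        have : ({4, 2} : Multiset ℕ) ≠ {5} := by decide
        have h' : ({4, 2} : Multiset ℕ).lcm = 4 := by decide
        rw [if_pos rfl, if_neg this]
        omega
      · rw [if_neg h5, if_neg h4]
        by_cases h1 : x = 1
        · rw [if_pos h1]; omega
        · have : orderOf (x : Perm (Fin 6)) ≠ 1 := by
            rw [Ne, orderOf_eq_one_iff]
            simpa using h1
          omega
  simp only [Finset.sum_add_distrib, ← Finset.mul_sum, Finset.sum_boole, e5, e4,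
    Finset.sum_const, Finset.card_univ, smul_eq_mul, Finset.sum_ite_eq', Finset.mem_univ,
    if_true, Nat.cast_id] at hs
  have h1 : (Finset.univ.filter fun g : alternatingGroup (Fin 6) => g = 1).card = 1 := by
    simp [Finset.filter_eq']
  have hf : Nat.factorial 6 = 720 := by decide
  rw [hf] at hN
  rw [h1] at hs
  clear h1 hf h5 h4 e5 e4
  generalize Fintype.card (alternatingGroup (Fin 6)) = N at *
  generalize (∑ x : alternatingGroup (Fin 6), orderOf (x : Perm (Fin 6))) = S at *
  omega

theorem alternating_avgOrder (n : ℕ) (hn : 5 ≤ n) :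
    n = 5 ∨ 71 / 20 ≤ avgOrder (alternatingGroup (Fin n)) := by
  by_cases h5 : n = 5
  · exact Or.inl h5
  right
  have key : 71 * Fintype.card (alternatingGroup (Fin n)) ≤
      20 * ∑ x : alternatingGroup (Fin n), orderOf (x : Perm (Fin n)) := by
    by_cases h6 : n = 6
    · subst h6; exact alt_six
    · exact alt_large n (by omega)
  unfold avgOrder
  have hpos : (0 : ℚ) < (Fintype.card (alternatingGroup (Fin n)) : ℚ) := by
    exact_mod_cast Fintype.card_pos
  rw [div_le_div_iff₀ (by norm_num) hpos]
  simp only [Subgroup.orderOf_coe] at key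
  have key' : (71 * Fintype.card (alternatingGroup (Fin n)) : ℚ) ≤
      20 * ∑ x : alternatingGroup (Fin n), (orderOf x : ℚ) := by exact_mod_cast key
  linarith
end

section
/- Let F be a finite field with |F| ≥ 4, let G = PSL(2, F) be the projective special linear group of degree 2 over F, and suppose that every prime dividing |G| belongs to {2, 3, 5, 7, 11, 13}. Then either G is isomorphic to the alternating group A_5, or o(G) ≥ 71/20. -/
/-- `PSL(2, F)`: the projective special linear group of degree 2 over `F`,
i.e. the quotient of `SL(2, F)` by its center. -/
abbrev PSL2 (F : Type*) [Field F] :=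
  Matrix.SpecialLinearGroup (Fin 2) F ⧸ Subgroup.center (Matrix.SpecialLinearGroup (Fin 2) F)


open Matrix

def sl2Equiv (F : Type*) [Field F] [DecidableEq F] :
    Matrix.SpecialLinearGroup (Fin 2) F ≃ (Fˣ × F × F) ⊕ (Fˣ × F) where
  toFun g := if h : g.1 0 0 = 0 then
      Sum.inr (Units.mk0 (g.1 0 1) (by
        intro h'; have := g.2; rw [Matrix.det_fin_two, h, h'] at this; simp at this), g.1 1 1)
    else Sum.inl (Units.mk0 (g.1 0 0) h, g.1 0 1, g.1 1 0)
  invFun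
    | Sum.inl (a, b, c) => ⟨!![(a : F), b; c, (1 + b * c) / a], by
        rw [Matrix.det_fin_two_of]; field_simp; ring⟩
    | Sum.inr (b, d) => ⟨!![0, (b : F); -(b : F)⁻¹, d], by
        rw [Matrix.det_fin_two_of]; field_simp; ring⟩
  left_inv g := by
    have hd := g.2
    rw [Matrix.det_fin_two] at hd
    by_cases h : g.1 0 0 = 0
    · simp only [h, dite_true]
      have h1 : g.1 0 1 ≠ 0 := by
        intro h'; rw [h, h'] at hd; simp at hd
      ext i j
      fin_cases i <;> fin_cases j <;> simp
      · exact h.symm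
      · field_simp
        rw [h] at hd
        linear_combination hd
    · simp only [h, dite_false]
      ext i j
      fin_cases i <;> fin_cases j <;> simp
      field_simp
      linear_combination -hd
  right_inv x := by
    rcases x with ⟨a, b, c⟩ | ⟨b, d⟩
    · simp
    · simp

lemma card_sl2 (F : Type*) [Field F] [Fintype F] [DecidableEq F] :
    Nat.card (Matrix.SpecialLinearGroup (Fin 2) F) =
      (Fintype.card F - 1) * Fintype.card F ^ 2 + (Fintype.card F - 1) * Fintype.card F := by
  rw [Nat.card_congr (sl2Equiv F), Nat.card_eq_fintype_card, Fintype.card_sum, Fintype.card_prod,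
    Fintype.card_prod, Fintype.card_prod, Fintype.card_units]
  ring

def traceMap {F : Type*} [Field F] [DecidableEq F] (t : F) :
    {g : Matrix.SpecialLinearGroup (Fin 2) F // g.1.trace = t} →
      (F × Fˣ) ⊕ ({a : F // a * (t - a) = 1} × F) := fun g =>
  if h : g.1.1 0 1 = 0 then
    Sum.inr (⟨g.1.1 0 0, by
      have h1 := g.1.2
      have h2 := g.2
      rw [Matrix.det_fin_two, h] at h1
      rw [Matrix.trace_fin_two] at h2
      linear_combination h1 - g.1.1 0 0 * h2⟩, g.1.1 1 0)
  else Sum.inl (g.1.1 0 0, Units.mk0 _ h)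

lemma traceMap_injective {F : Type*} [Field F] [DecidableEq F] (t : F) :
    Function.Injective (traceMap t) := by
  rintro ⟨g, hg⟩ ⟨k, hk⟩ h
  have hg1 := g.2
  have hk1 := k.2
  rw [Matrix.det_fin_two] at hg1 hk1
  rw [Matrix.trace_fin_two] at hg hk
  have key : g.1 0 0 = k.1 0 0 ∧ g.1 0 1 = k.1 0 1 ∧ g.1 1 0 = k.1 1 0 := by
    unfold traceMap at h
    by_cases h1 : g.1 0 1 = 0 <;> by_cases h2 : k.1 0 1 = 0 <;> simp [h1, h2] at h
    · exact ⟨h.1, by rw [h1, h2], h.2⟩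
    · refine ⟨h.1, h.2, ?_⟩
      have h3 : g.1 1 1 = k.1 1 1 := by
        have := h.1
        linear_combination hg - hk - this
      apply mul_left_cancel₀ h1
      rw [h.1, h3] at hg1
      rw [← h.2] at hk1
      linear_combination hk1 - hg1
  obtain ⟨h1, h2, h3⟩ := key
  have h4 : g.1 1 1 = k.1 1 1 := by linear_combination hg - hk - h1
  apply Subtype.ext
  ext i j
  fin_cases i <;> fin_cases j <;> assumption

lemma card_roots_le {F : Type*} [Field F] [Fintype F] [DecidableEq F] (t : F) :
    Fintype.card {a : F // a * (t - a) = 1} ≤ 2 := by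
  by_contra! hc
  rw [Fintype.two_lt_card_iff] at hc
  obtain ⟨⟨a, ha⟩, ⟨b, hb⟩, ⟨c, hc⟩, hab, hac, hbc⟩ := hc
  simp only [ne_eq, Subtype.mk.injEq] at hab hac hbc
  have h1 : t - a - b = 0 := by
    apply mul_left_cancel₀ (sub_ne_zero.mpr hab)
    linear_combination ha - hb
  have h2 : t - a - c = 0 := by
    apply mul_left_cancel₀ (sub_ne_zero.mpr hac)
    linear_combination ha - hc
  exact hbc (by linear_combination h2 - h1)

lemma card_trace_le {F : Type*} [Field F] [Fintype F] [DecidableEq F] (t : F) :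
    (Finset.univ.filter fun g : Matrix.SpecialLinearGroup (Fin 2) F => g.1.trace = t).card ≤
      Fintype.card F ^ 2 + Fintype.card F := by
  rw [← Fintype.card_subtype]
  refine (Fintype.card_le_of_injective _ (traceMap_injective t)).trans ?_
  rw [Fintype.card_sum, Fintype.card_prod, Fintype.card_prod, Fintype.card_units]
  have := card_roots_le t
  have hq : 0 < Fintype.card F := Fintype.card_pos
  obtain ⟨m, hm⟩ : ∃ m, Fintype.card F = m + 1 := ⟨_, (Nat.succ_pred_eq_of_pos hq).symm⟩
  rw [hm]
  simp only [Nat.add_sub_cancel]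
  nlinarith

lemma mem_center_sl2 {F : Type*} [CommRing F] {g : Matrix.SpecialLinearGroup (Fin 2) F} :
    g ∈ Subgroup.center (Matrix.SpecialLinearGroup (Fin 2) F) ↔
      g.1 0 1 = 0 ∧ g.1 1 0 = 0 ∧ g.1 0 0 = g.1 1 1 := by
  rw [Matrix.SpecialLinearGroup.mem_center_iff]
  constructor
  · rintro ⟨r, -, hr⟩
    rw [← hr]
    simp
  · rintro ⟨h1, h2, h3⟩
    refine ⟨g.1 0 0, ?_, ?_⟩
    · have := g.2
      rw [Matrix.det_fin_two, h1, ← h3] at this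
      simp only [Fintype.card_fin]
      linear_combination this
    · ext i j
      fin_cases i <;> fin_cases j <;> simp [h1, h2, h3]

section
variable {F : Type*} [Field F]

lemma coeff_zero {g : Matrix.SpecialLinearGroup (Fin 2) F} {n : ℕ} {u v : F}
    (hg : g ∉ Subgroup.center (Matrix.SpecialLinearGroup (Fin 2) F))
    (h : g.1 ^ n = u • g.1 - v • (1 : Matrix (Fin 2) (Fin 2) F))
    (hn : (QuotientGroup.mk g : PSL2 F) ^ n = 1) : u = 0 := by
  by_contra hu
  apply hg
  rw [← QuotientGroup.mk_pow, QuotientGroup.eq_one_iff, mem_center_sl2] at hn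
  have h' : (g ^ n).1 = u • g.1 - v • (1 : Matrix (Fin 2) (Fin 2) F) := by
    rw [← h]; exact Matrix.SpecialLinearGroup.coe_pow g n
  rw [h'] at hn
  simp [hu] at hn
  exact mem_center_sl2.mpr hn

lemma sq_eq (g : Matrix.SpecialLinearGroup (Fin 2) F) :
    g.1 ^ 2 = g.1.trace • g.1 - (1 : F) • (1 : Matrix (Fin 2) (Fin 2) F) := by
  have h := g.2
  rw [Matrix.det_fin_two] at h
  rw [Matrix.trace_fin_two, pow_two]
  ext i j
  fin_cases i <;> fin_cases j <;> simp [Matrix.mul_apply, Fin.sum_univ_two] <;>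
    first | ring1 | linear_combination h | linear_combination (-1 : F) * h

lemma cube_eq (g : Matrix.SpecialLinearGroup (Fin 2) F) :
    g.1 ^ 3 = (g.1.trace ^ 2 - 1) • g.1 - g.1.trace • (1 : Matrix (Fin 2) (Fin 2) F) := by
  rw [pow_succ, sq_eq, sub_mul, smul_mul_assoc, ← pow_two, sq_eq]
  simp only [one_smul, one_mul]
  module

lemma four_eq (g : Matrix.SpecialLinearGroup (Fin 2) F) :
    g.1 ^ 4 = (g.1.trace * (g.1.trace ^ 2 - 2)) • g.1 -
      (g.1.trace ^ 2 - 1) • (1 : Matrix (Fin 2) (Fin 2) F) := by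
  rw [pow_succ, cube_eq, sub_mul, smul_mul_assoc, ← pow_two, sq_eq]
  simp only [smul_mul_assoc, one_mul]
  module

open Classical in
/-- Elements of small order in the quotient have restricted traces. -/
lemma order_cases [Finite F] (g : Matrix.SpecialLinearGroup (Fin 2) F) :
    1 ≤ orderOf (QuotientGroup.mk g : PSL2 F) ∧
    (g ∈ Subgroup.center (Matrix.SpecialLinearGroup (Fin 2) F) ∨
     (g.1.trace ^ 2 = 0 ∧ 2 ≤ orderOf (QuotientGroup.mk g : PSL2 F)) ∨
     (g.1.trace ^ 2 = 1 ∧ 3 ≤ orderOf (QuotientGroup.mk g : PSL2 F)) ∨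
     (g.1.trace ^ 2 = 2 ∧ 4 ≤ orderOf (QuotientGroup.mk g : PSL2 F)) ∨
     5 ≤ orderOf (QuotientGroup.mk g : PSL2 F)) := by
  have hpos : 1 ≤ orderOf (QuotientGroup.mk g : PSL2 F) := orderOf_pos _
  refine ⟨hpos, ?_⟩
  by_cases hg : g ∈ Subgroup.center (Matrix.SpecialLinearGroup (Fin 2) F)
  · exact Or.inl hg
  right
  have hp := pow_orderOf_eq_one (QuotientGroup.mk g : PSL2 F)
  generalize orderOf (QuotientGroup.mk g : PSL2 F) = n at *
  by_cases h5 : 5 ≤ n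
  · simp [h5]
  have : n = 1 ∨ n = 2 ∨ n = 3 ∨ n = 4 := by omega
  rcases this with rfl | rfl | rfl | rfl
  · have := coeff_zero (n := 1) (u := 1) (v := 0) hg (by simp) hp
    simp at this
  · have := coeff_zero hg (sq_eq g) hp
    left
    simp [this]
  · have := coeff_zero hg (cube_eq g) hp
    right; left
    exact ⟨by linear_combination this, le_rfl⟩
  · have := coeff_zero hg (four_eq g) hp
    rcases mul_eq_zero.mp this with h | h
    · left; simp [h]
    · right; right; left
      exact ⟨by linear_combination h, le_rfl⟩

variable [Fintype F] [DecidableEq F]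

lemma card_trace_sq_le (c : F) :
    (Finset.univ.filter fun g : Matrix.SpecialLinearGroup (Fin 2) F => g.1.trace ^ 2 = c).card ≤
      2 * (Fintype.card F ^ 2 + Fintype.card F) := by
  by_cases hc : ∃ s : F, s ^ 2 = c
  · obtain ⟨s, rfl⟩ := hc
    have : (Finset.univ.filter fun g : Matrix.SpecialLinearGroup (Fin 2) F =>
        g.1.trace ^ 2 = s ^ 2) ⊆
        (Finset.univ.filter fun g : Matrix.SpecialLinearGroup (Fin 2) F => g.1.trace = s) ∪
        (Finset.univ.filter fun g : Matrix.SpecialLinearGroup (Fin 2) F => g.1.trace = -s) := by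
      intro g
      simp only [Finset.mem_filter, Finset.mem_univ, true_and, Finset.mem_union]
      exact sq_eq_sq_iff_eq_or_eq_neg.mp
    refine (Finset.card_le_card this).trans ((Finset.card_union_le _ _).trans ?_)
    have h1 := card_trace_le s
    have h2 := card_trace_le (-s)
    omega
  · rw [Finset.filter_false_of_mem]
    · simp
    · intro g _ h
      exact hc ⟨_, h⟩

lemma card_trace_sq_zero_le :
    (Finset.univ.filter fun g : Matrix.SpecialLinearGroup (Fin 2) F => g.1.trace ^ 2 = 0).card ≤
      Fintype.card F ^ 2 + Fintype.card F := by
  simpa using card_trace_le (0 : F)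

open Classical in
lemma card_center_le :
    (Finset.univ.filter fun g : Matrix.SpecialLinearGroup (Fin 2) F =>
      g ∈ Subgroup.center (Matrix.SpecialLinearGroup (Fin 2) F)).card ≤ 2 := by
  have hsub : ∀ g ∈ (Finset.univ.filter fun g : Matrix.SpecialLinearGroup (Fin 2) F =>
      g ∈ Subgroup.center (Matrix.SpecialLinearGroup (Fin 2) F)),
      g ∈ ({1, -1} : Finset (Matrix.SpecialLinearGroup (Fin 2) F)) := by
    intro g hg
    simp only [Finset.mem_filter, Finset.mem_univ, true_and] at hg
    obtain ⟨h1, h2, h3⟩ := mem_center_sl2.mp hg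
    have hd := g.2
    rw [Matrix.det_fin_two, h1, ← h3] at hd
    have : g.1 0 0 = 1 ∨ g.1 0 0 = -1 := by
      have h0 : (g.1 0 0 - 1) * (g.1 0 0 + 1) = 0 := by linear_combination hd
      rcases mul_eq_zero.mp h0 with h | h
      · left; linear_combination h
      · right; linear_combination h
    simp only [Finset.mem_insert, Finset.mem_singleton]
    rcases this with h | h
    · left
      ext i j
      fin_cases i <;> fin_cases j <;> simp [h1, h2, ← h3, h]
    · right
      ext i j
      fin_cases i <;> fin_cases j <;> simp [h1, h2, ← h3, h]
  exact (Finset.card_le_card hsub).trans Finset.card_le_two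

lemma avgOrder_eq [Fintype (PSL2 F)] :
    avgOrder (PSL2 F) =
      ((∑ g : Matrix.SpecialLinearGroup (Fin 2) F,
        orderOf (QuotientGroup.mk g : PSL2 F) : ℕ) : ℚ) /
        (Nat.card (Matrix.SpecialLinearGroup (Fin 2) F) : ℚ) := by
  classical
  set Z := Subgroup.center (Matrix.SpecialLinearGroup (Fin 2) F) with hZ
  have hc := Z.card_eq_card_quotient_mul_card_subgroup
  have hs : (∑ g : Matrix.SpecialLinearGroup (Fin 2) F,
        orderOf (QuotientGroup.mk g : PSL2 F)) = (∑ x : PSL2 F, orderOf x) * Nat.card Z := by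
    rw [← Finset.sum_fiberwise (s := Finset.univ)
      (g := fun g : Matrix.SpecialLinearGroup (Fin 2) F => (QuotientGroup.mk g : PSL2 F)),
      Finset.sum_mul]
    refine Finset.sum_congr rfl fun x _ => ?_
    rw [Finset.sum_congr rfl (g := fun _ => orderOf x)]
    · rw [Finset.sum_const, smul_eq_mul, mul_comm]
      congr 1
      induction x using QuotientGroup.induction_on with
      | H x =>
      rw [← Fintype.card_subtype, ← Nat.card_eq_fintype_card]
      refine Nat.card_congr ?_
      refine (Equiv.subtypeEquiv (Equiv.mulLeft x⁻¹) ?_)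
      intro a
      rw [eq_comm, QuotientGroup.eq]
      rfl
    · intro g hg
      simp only [Finset.mem_filter] at hg
      rw [hg.2]
  have hpos : (Nat.card Z : ℚ) ≠ 0 := by
    exact_mod_cast Nat.card_pos.ne'
  rw [hs, hc, avgOrder, ← Nat.card_eq_fintype_card]
  push_cast
  rw [mul_div_mul_right _ _ hpos]

lemma sum_ge_general :
    5 * Nat.card (Matrix.SpecialLinearGroup (Fin 2) F) ≤
      (∑ g : Matrix.SpecialLinearGroup (Fin 2) F, orderOf (QuotientGroup.mk g : PSL2 F)) +
      8 + 9 * (Fintype.card F ^ 2 + Fintype.card F) := by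
  classical
  have h : ∀ g : Matrix.SpecialLinearGroup (Fin 2) F, 5 ≤
      orderOf (QuotientGroup.mk g : PSL2 F) +
      4 * (if g ∈ Subgroup.center (Matrix.SpecialLinearGroup (Fin 2) F) then 1 else 0) +
      3 * (if g.1.trace ^ 2 = 0 then 1 else 0) + 2 * (if g.1.trace ^ 2 = 1 then 1 else 0) +
      1 * (if g.1.trace ^ 2 = 2 then 1 else 0) := by
    intro g
    obtain ⟨h1, h | ⟨h, h'⟩ | ⟨h, h'⟩ | ⟨h, h'⟩ | h⟩ := order_cases g
    all_goals first | rw [if_pos h] | skip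
    all_goals omega
  have := Finset.sum_le_sum (s := Finset.univ) fun g _ => h g
  simp only [Finset.sum_add_distrib, ← Finset.mul_sum, Finset.sum_boole, Finset.sum_const,
    smul_eq_mul, Finset.card_univ, Nat.cast_id] at this
  have h1 := card_center_le (F := F)
  have h2 := card_trace_sq_zero_le (F := F)
  have h3 := card_trace_sq_le (1 : F)
  have h4 := card_trace_sq_le (2 : F)
  rw [Nat.card_eq_fintype_card]
  omega

lemma sum_ge_no_five (h5 : ∀ x : PSL2 F, orderOf x ≠ 5) :
    6 * Nat.card (Matrix.SpecialLinearGroup (Fin 2) F) ≤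
      (∑ g : Matrix.SpecialLinearGroup (Fin 2) F, orderOf (QuotientGroup.mk g : PSL2 F)) +
      10 + 14 * (Fintype.card F ^ 2 + Fintype.card F) := by
  classical
  have h : ∀ g : Matrix.SpecialLinearGroup (Fin 2) F, 6 ≤
      orderOf (QuotientGroup.mk g : PSL2 F) +
      5 * (if g ∈ Subgroup.center (Matrix.SpecialLinearGroup (Fin 2) F) then 1 else 0) +
      4 * (if g.1.trace ^ 2 = 0 then 1 else 0) + 3 * (if g.1.trace ^ 2 = 1 then 1 else 0) +
      2 * (if g.1.trace ^ 2 = 2 then 1 else 0) := by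
    intro g
    have := h5 (QuotientGroup.mk g)
    obtain ⟨h1, h | ⟨h, h'⟩ | ⟨h, h'⟩ | ⟨h, h'⟩ | h⟩ := order_cases g
    all_goals first | rw [if_pos h] | skip
    all_goals omega
  have := Finset.sum_le_sum (s := Finset.univ) fun g _ => h g
  simp only [Finset.sum_add_distrib, ← Finset.mul_sum, Finset.sum_boole, Finset.sum_const,
    smul_eq_mul, Finset.card_univ, Nat.cast_id] at this
  have h1 := card_center_le (F := F)
  have h2 := card_trace_sq_zero_le (F := F)
  have h3 := card_trace_sq_le (1 : F)
  have h4 := card_trace_sq_le (2 : F)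
  rw [Nat.card_eq_fintype_card]
  omega

lemma avg_large [Fintype (PSL2 F)] (hq : 8 ≤ Fintype.card F) :
    71 / 20 ≤ avgOrder (PSL2 F) := by
  have h := sum_ge_general (F := F)
  have hc := card_sl2 F
  rw [avgOrder_eq, le_div_iff₀ (by exact_mod_cast Nat.card_pos)]
  set S := (∑ g : Matrix.SpecialLinearGroup (Fin 2) F, orderOf (QuotientGroup.mk g : PSL2 F))
  set N := Nat.card (Matrix.SpecialLinearGroup (Fin 2) F)
  obtain ⟨m, hm⟩ : ∃ m, Fintype.card F = m + 8 := ⟨_, (Nat.sub_add_cancel hq).symm⟩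
  rw [hm] at h hc
  have e : m + 8 - 1 = m + 7 := rfl
  rw [e] at hc
  have : 71 * N ≤ 20 * S := by
    nlinarith
  have : (71 : ℚ) * N ≤ 20 * S := by exact_mod_cast this
  linarith

lemma avg_seven [Fintype (PSL2 F)] (hq : Fintype.card F = 7) :
    71 / 20 ≤ avgOrder (PSL2 F) := by
  have hc := card_sl2 F
  have h := sum_ge_no_five (F := F) (by
    intro x hx
    have h1 : orderOf x ∣ Nat.card (PSL2 F) := orderOf_dvd_natCard x
    have h2 := h1.trans (Subgroup.card_quotient_dvd_card _)
    rw [hc, hq, hx] at h2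
    norm_num at h2)
  rw [avgOrder_eq, le_div_iff₀ (by exact_mod_cast Nat.card_pos)]
  set S := (∑ g : Matrix.SpecialLinearGroup (Fin 2) F, orderOf (QuotientGroup.mk g : PSL2 F))
  set N := Nat.card (Matrix.SpecialLinearGroup (Fin 2) F)
  rw [hq] at h hc
  have : 71 * N ≤ 20 * S := by omega
  have : (71 : ℚ) * N ≤ 20 * S := by exact_mod_cast this
  linarith

end

/-! ### The exceptional isomorphisms with `A₅` -/

section
variable {F : Type*} [Field F]

lemma iso_of_hom {α : Type*} [Fintype α] [DecidableEq α] (hα : Fintype.card α = 5)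
    (φ : Matrix.SpecialLinearGroup (Fin 2) F →* Equiv.Perm α)
    (hk : φ.ker = Subgroup.center (Matrix.SpecialLinearGroup (Fin 2) F))
    (hc : Nat.card (PSL2 F) = 60) :
    Nonempty (PSL2 F ≃* alternatingGroup (Fin 5)) := by
  have e1 : PSL2 F ≃* φ.range :=
    (QuotientGroup.quotientMulEquivOfEq hk.symm).trans (QuotientGroup.quotientKerEquivRange φ)
  have h1 : Nat.card φ.range = 60 := by rw [← hc]; exact (Nat.card_congr e1.toEquiv).symm
  have h2 : φ.range.index = 2 := by
    have := φ.range.card_mul_index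
    rw [h1, Nat.card_eq_fintype_card, Fintype.card_perm, hα] at this
    have h5 : Nat.factorial 5 = 120 := rfl
    omega
  have h3 := Equiv.Perm.eq_alternatingGroup_of_index_eq_two h2
  exact ⟨e1.trans ((MulEquiv.subgroupCongr h3).trans
    (Equiv.altCongrHom (Fintype.equivFinOfCardEq hα)))⟩

variable [Fintype F] [DecidableEq F]

lemma iso_four (hq : Fintype.card F = 4) :
    Nonempty (PSL2 F ≃* alternatingGroup (Fin 5)) := by
  classical
  have h2 : (2 : F) = 0 := by
    have h4 : ((Fintype.card F : ℕ) : F) = 0 := Nat.cast_card_eq_zero F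
    rw [hq] at h4
    have : (2 : F) * 2 = 0 := by
      push_cast at h4
      linear_combination h4
    simpa using this
  have hZ : Subgroup.center (Matrix.SpecialLinearGroup (Fin 2) F) = ⊥ := by
    rw [eq_bot_iff]
    intro g hg
    obtain ⟨h1, h2', h3⟩ := mem_center_sl2.mp hg
    have hd := g.2
    rw [Matrix.det_fin_two, h1, ← h3] at hd
    have h0 : (g.1 0 0 - 1) ^ 2 = 0 := by
      linear_combination hd + (1 - g.1 0 0) * h2
    have h : g.1 0 0 = 1 := by
      have := pow_eq_zero_iff (two_ne_zero) |>.mp h0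
      linear_combination this
    rw [Subgroup.mem_bot]
    ext i j
    fin_cases i <;> fin_cases j <;> simp [h1, h2', ← h3, h]
  have hcard : Nat.card (PSL2 F) = 60 := by
    have := (Subgroup.center (Matrix.SpecialLinearGroup (Fin 2) F)).card_eq_card_quotient_mul_card_subgroup
    rw [card_sl2, hq, hZ, Subgroup.card_bot] at this
    unfold PSL2
    rw [hZ]
    omega
  let _ : Fintype (OnePoint F) := inferInstanceAs (Fintype (Option F))
  have h5 : Fintype.card (OnePoint F) = 5 := by
    have : Fintype.card (OnePoint F) = Fintype.card (Option F) := rfl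
    rw [this, Fintype.card_option, hq]
  refine iso_of_hom h5 ((MulAction.toPermHom (Matrix.GeneralLinearGroup (Fin 2) F)
    (OnePoint F)).comp Matrix.SpecialLinearGroup.toGL) ?_ hcard
  rw [hZ, eq_bot_iff, ← hZ]
  intro g hg
  rw [MonoidHom.mem_ker] at hg
  have hact : ∀ x : OnePoint F, (Matrix.SpecialLinearGroup.toGL g) • x = x := by
    intro x
    exact congrArg (fun σ : Equiv.Perm (OnePoint F) => σ x) hg
  have hinf : g.1 1 0 = 0 := OnePoint.smul_infty_eq_self_iff.mp (hact OnePoint.infty)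
  have hd := g.2
  rw [Matrix.det_fin_two, hinf] at hd
  have hd1 : g.1 1 1 ≠ 0 := by
    intro h
    rw [h] at hd
    simp at hd
  have hk : ∀ k : F, (g.1 0 0 * k + g.1 0 1) / g.1 1 1 = k := by
    intro k
    have := hact (k : OnePoint F)
    rw [OnePoint.smul_some_eq_ite] at this
    change (if g.1 1 0 * k + g.1 1 1 = 0 then OnePoint.infty else
      (((g.1 0 0 * k + g.1 0 1) / (g.1 1 0 * k + g.1 1 1) : F) : OnePoint F)) = _ at this
    rw [hinf, zero_mul, zero_add, if_neg hd1] at this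
    exact OnePoint.coe_injective this
  have hk0 := hk 0
  have hk1 := hk 1
  rw [div_eq_iff hd1] at hk0 hk1
  have h01 : g.1 0 1 = 0 := by linear_combination hk0
  exact mem_center_sl2.mpr ⟨h01, hinf, by linear_combination hk1 - h01⟩

end

section five

/-- The relation equal up to sign or orthogonal on trace zero matrices over `𝔽₅`. -/
def frameRel (x y z x' y' z' : ZMod 5) : Prop :=
  2 * x * x' + y * z' + z * y' = 0 ∨ (x = x' ∧ y = y' ∧ z = z') ∨ (x = -x' ∧ y = -y' ∧ z = -z')

instance (x y z x' y' z' : ZMod 5) : Decidable (frameRel x y z x' y' z') := by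
  unfold frameRel; infer_instance

/-- The index of the frame of the trace zero matrix with entries `x, y, z, -x`. -/
def frameIdx (x y z : ZMod 5) : ZMod 5 :=
  if frameRel x y z 2 0 0 then 0 else if frameRel x y z 2 0 1 then 1 else
  if frameRel x y z 2 0 2 then 2 else if frameRel x y z 2 0 3 then 3 else 4

lemma frameIdx_rel : ∀ x y z : ZMod 5, -x * x - y * z = 1 →
    frameRel x y z 2 0 (frameIdx x y z) := by
  decide +kernel

lemma frameIdx_rep : ∀ i : ZMod 5, frameIdx 2 0 i = i := by
  decide +kernel

lemma frameIdx_eq : ∀ x y z : ZMod 5, -x * x - y * z = 1 → ∀ x' y' z' : ZMod 5,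
    -x' * x' - y' * z' = 1 → frameRel x y z x' y' z' → frameIdx x y z = frameIdx x' y' z' := by
  decide +kernel

lemma frameIdx_ker : ∀ a b c d : ZMod 5, a * d - b * c = 1 →
    (∀ i : ZMod 5, frameIdx ((a * 2 + b * i) * d + b * 2 * c) (-(a * 2 + b * i) * b - b * 2 * a)
      ((c * 2 + d * i) * d + d * 2 * c) = i) → b = 0 ∧ c = 0 ∧ a = d := by
  decide +kernel

attribute [irreducible] frameIdx

local notation "SL5" => Matrix.SpecialLinearGroup (Fin 2) (ZMod 5)

/-- Representatives of the five frames. -/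
def frameRep (i : ZMod 5) : SL5 := ⟨!![2, 0; i, -2], by
  rw [Matrix.det_fin_two_of]; simp; rfl⟩

/-- The frame index of a matrix. -/
def frameOf (B : SL5) : ZMod 5 := frameIdx (B.1 0 0) (B.1 0 1) (B.1 1 0)

lemma trace_rep (i : ZMod 5) : (frameRep i).1.trace = 0 := by
  simp [frameRep, Matrix.trace_fin_two]

lemma det_of_trace {B : SL5} (hB : B.1.trace = 0) :
    B.1 1 1 = -B.1 0 0 ∧ -B.1 0 0 * B.1 0 0 - B.1 0 1 * B.1 1 0 = 1 := by
  have hd := B.2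
  rw [Matrix.det_fin_two] at hd
  rw [Matrix.trace_fin_two] at hB
  refine ⟨by linear_combination hB, by linear_combination hd - B.1 0 0 * hB⟩

lemma frameRel_iff {B C : SL5} (hB : B.1.trace = 0) (hC : C.1.trace = 0) :
    frameRel (B.1 0 0) (B.1 0 1) (B.1 1 0) (C.1 0 0) (C.1 0 1) (C.1 1 0) ↔
      ((B * C).1.trace = 0 ∨ B = C ∨ B = -C) := by
  obtain ⟨hB1, -⟩ := det_of_trace hB
  obtain ⟨hC1, -⟩ := det_of_trace hC
  unfold frameRel
  have e : (B * C).1.trace = 2 * B.1 0 0 * C.1 0 0 + B.1 0 1 * C.1 1 0 + B.1 1 0 * C.1 0 1 := by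
    rw [Matrix.SpecialLinearGroup.coe_mul, Matrix.trace_fin_two]
    simp only [Matrix.mul_apply, Fin.sum_univ_two, hB1, hC1]
    ring
  rw [e]
  refine or_congr Iff.rfl (or_congr ?_ ?_)
  · constructor
    · rintro ⟨h1, h2, h3⟩
      ext i j
      fin_cases i <;> fin_cases j <;> simp [h1, h2, h3, hB1, hC1]
    · rintro rfl; simp
  · constructor
    · rintro ⟨h1, h2, h3⟩
      ext i j
      fin_cases i <;> fin_cases j <;> simp [h1, h2, h3, hB1, hC1]
    · rintro rfl; simp

lemma trace_conj (g B : SL5) : (g * B * g⁻¹).1.trace = B.1.trace := by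
  have h : (g⁻¹ * (g * B)).1 = B.1 := by rw [inv_mul_cancel_left]
  calc (g * B * g⁻¹).1.trace = ((g * B).1 * (g⁻¹).1).trace := by
        rw [Matrix.SpecialLinearGroup.coe_mul]
    _ = ((g⁻¹).1 * (g * B).1).trace := Matrix.trace_mul_comm _ _
    _ = (g⁻¹ * (g * B)).1.trace := by rw [Matrix.SpecialLinearGroup.coe_mul g⁻¹]
    _ = B.1.trace := by rw [h]

lemma frameOf_conj (g : SL5) {B : SL5} (hB : B.1.trace = 0) :
    frameOf (g * B * g⁻¹) = frameOf (g * frameRep (frameOf B) * g⁻¹) := by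
  have hR := trace_rep (frameOf B)
  have h1 : frameRel (B.1 0 0) (B.1 0 1) (B.1 1 0) ((frameRep (frameOf B)).1 0 0)
      ((frameRep (frameOf B)).1 0 1) ((frameRep (frameOf B)).1 1 0) :=
    frameIdx_rel _ _ _ (det_of_trace hB).2
  rw [frameRel_iff hB hR] at h1
  have t1 : (g * B * g⁻¹).1.trace = 0 := by rw [trace_conj, hB]
  have t2 : (g * frameRep (frameOf B) * g⁻¹).1.trace = 0 := by rw [trace_conj, hR]
  refine frameIdx_eq _ _ _ (det_of_trace t1).2 _ _ _ (det_of_trace t2).2 ?_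
  rw [frameRel_iff t1 t2]
  rcases h1 with h | h | h
  · left
    have e : g * B * g⁻¹ * (g * frameRep (frameOf B) * g⁻¹) =
      g * (B * frameRep (frameOf B)) * g⁻¹ := by group
    rw [e, trace_conj, h]
  · right; left
    rw [← h]
  · right; right
    generalize frameRep (frameOf B) = C at h
    rw [h, mul_neg, neg_mul]

/-- The action of `SL(2, 5)` on the five frames. -/
def frameMap (g : SL5) (i : ZMod 5) : ZMod 5 := frameOf (g * frameRep i * g⁻¹)

lemma frameMap_one (i : ZMod 5) : frameMap 1 i = i := by
  have : frameMap 1 i = frameOf (frameRep i) := by simp [frameMap]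
  rw [this]
  exact frameIdx_rep i

lemma frameMap_mul (g h : SL5) (i : ZMod 5) : frameMap (g * h) i = frameMap g (frameMap h i) := by
  have t : (h * frameRep i * h⁻¹).1.trace = 0 := by rw [trace_conj, trace_rep]
  have := frameOf_conj g t
  have e : g * h * frameRep i * (g * h)⁻¹ = g * (h * frameRep i * h⁻¹) * g⁻¹ := by
    rw [_root_.mul_inv_rev]; simp only [mul_assoc]
  simp only [frameMap]
  rw [e]
  exact this

/-- The action of `SL(2, 5)` on the five frames, as an action on `ZMod 5`. -/
@[reducible]
def frameAction : MulAction SL5 (ZMod 5) where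
  smul := frameMap
  one_smul := frameMap_one
  mul_smul := frameMap_mul

/-- The homomorphism from `SL(2, 5)` to the symmetric group on five letters. -/
def frameHom : SL5 →* Equiv.Perm (ZMod 5) :=
  @MulAction.toPermHom SL5 (ZMod 5) _ frameAction

lemma frameHom_apply (g : SL5) (i : ZMod 5) : frameHom g i = frameMap g i := rfl

lemma frameHom_ker : frameHom.ker = Subgroup.center SL5 := by
  ext g
  rw [MonoidHom.mem_ker]
  constructor
  · intro hg
    have h : ∀ i, frameMap g i = i := fun i => by
      rw [← frameHom_apply, hg, Equiv.Perm.one_apply]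
    have hd := g.2
    rw [Matrix.det_fin_two] at hd
    apply mem_center_sl2.mpr
    refine frameIdx_ker (g.1 0 0) (g.1 0 1) (g.1 1 0) (g.1 1 1) hd fun i => ?_
    have e : (g * frameRep i * g⁻¹).1 = g.1 * !![2, 0; i, -2] *
        !![g.1 1 1, -g.1 0 1; -g.1 1 0, g.1 0 0] := by
      rw [Matrix.SpecialLinearGroup.coe_mul, Matrix.SpecialLinearGroup.coe_mul,
        Matrix.SpecialLinearGroup.SL2_inv_expl]
      rfl
    have hi := h i
    rw [frameMap, frameOf, e] at hi
    have e00 : (g.1 * !![2, 0; i, -2] * !![g.1 1 1, -g.1 0 1; -g.1 1 0, g.1 0 0]) 0 0 =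
        (g.1 0 0 * 2 + g.1 0 1 * i) * g.1 1 1 + g.1 0 1 * 2 * g.1 1 0 := by
      simp [Matrix.mul_apply, Fin.sum_univ_two]
    have e01 : (g.1 * !![2, 0; i, -2] * !![g.1 1 1, -g.1 0 1; -g.1 1 0, g.1 0 0]) 0 1 =
        -(g.1 0 0 * 2 + g.1 0 1 * i) * g.1 0 1 - g.1 0 1 * 2 * g.1 0 0 := by
      simp [Matrix.mul_apply, Fin.sum_univ_two]
      ring
    have e10 : (g.1 * !![2, 0; i, -2] * !![g.1 1 1, -g.1 0 1; -g.1 1 0, g.1 0 0]) 1 0 =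
        (g.1 1 0 * 2 + g.1 1 1 * i) * g.1 1 1 + g.1 1 1 * 2 * g.1 1 0 := by
      simp [Matrix.mul_apply, Fin.sum_univ_two]
    rw [e00, e01, e10] at hi
    exact hi
  · intro hg
    refine Equiv.ext fun i => ?_
    rw [frameHom_apply, Equiv.Perm.one_apply]
    unfold frameMap
    rw [← Subgroup.mem_center_iff.mp hg, mul_inv_cancel_right]
    exact frameIdx_rep i

lemma two_ne_zero_five : (2 : ZMod 5) ≠ 0 := by decide

lemma iso_five {F : Type*} [Field F] [Fintype F] [DecidableEq F] (hq : Fintype.card F = 5) :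
    Nonempty (PSL2 F ≃* alternatingGroup (Fin 5)) := by
  classical
  have : Fact (Nat.Prime 5) := ⟨by norm_num⟩
  let e : F ≃+* ZMod 5 := (ZMod.ringEquivOfPrime F (by norm_num) hq).symm
  have h2 : (2 : F) ≠ 0 := by
    intro h
    have := congrArg e h
    rw [map_ofNat, map_zero] at this
    exact two_ne_zero_five this
  let Z := Subgroup.center (Matrix.SpecialLinearGroup (Fin 2) F)
  have hne : (1 : Matrix.SpecialLinearGroup (Fin 2) F) ≠ -1 := by
    intro h
    have := congrArg (fun g : Matrix.SpecialLinearGroup (Fin 2) F => g.1 0 0) h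
    simp at this
    apply h2
    linear_combination this
  have hZ : Nat.card Z = 2 := by
    apply le_antisymm
    · rw [Nat.card_eq_fintype_card, Fintype.card_subtype]
      exact card_center_le
    · rw [Nat.card_eq_fintype_card]
      apply Fintype.one_lt_card_iff.mpr
      refine ⟨⟨1, Z.one_mem⟩, ⟨-1, mem_center_sl2.mpr (by simp)⟩, ?_⟩
      intro h
      exact hne (congrArg Subtype.val h)
  have hcard : Nat.card (PSL2 F) = 60 := by
    have := Z.card_eq_card_quotient_mul_card_subgroup
    rw [card_sl2, hq, hZ] at this
    change Nat.card (Matrix.SpecialLinearGroup (Fin 2) F ⧸ Z) = 60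
    omega
  refine iso_of_hom (ZMod.card 5) (frameHom.comp (Matrix.SpecialLinearGroup.map e.toRingHom)) ?_
    hcard
  ext g
  rw [← MonoidHom.comap_ker, Subgroup.mem_comap, frameHom_ker, mem_center_sl2, mem_center_sl2]
  change (e (g.1 0 1) = 0 ∧ e (g.1 1 0) = 0 ∧ e (g.1 0 0) = e (g.1 1 1)) ↔ _
  simp

end five

theorem psl2_avgOrder (F : Type*) [Field F] [Fintype F] [DecidableEq F]
    [Fintype (PSL2 F)]
    (hF : 4 ≤ Fintype.card F)
    (hp : ∀ p : ℕ, p.Prime → p ∣ Fintype.card (PSL2 F) → p ∈ ({2, 3, 5, 7, 11, 13} : Finset ℕ)) :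
    Nonempty (PSL2 F ≃* alternatingGroup (Fin 5)) ∨ 71 / 20 ≤ avgOrder (PSL2 F) := by
  by_cases h8 : 8 ≤ Fintype.card F
  · exact Or.inr (avg_large h8)
  have h : Fintype.card F = 4 ∨ Fintype.card F = 5 ∨ Fintype.card F = 6 ∨ Fintype.card F = 7 := by
    omega
  rcases h with h | h | h | h
  · exact Or.inl (iso_four h)
  · exact Or.inl (iso_five h)
  · exfalso
    have := FiniteField.isPrimePow_card F
    rw [h] at this
    exact absurd this (by decide)
  · exact Or.inr (avg_seven h)
end
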